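/- arXiv:2306.10446 — 3 statements merged into one kernel-verified Lean document; each statement's English description precedes it below -/
import Mathlib

section
/- Let p be a prime with p ∉ {2,3}, and let s be a real number with s ≥ 1. Let μ be a translation-invariant (additive Haar) Borel measure on the ℚ_p-vector space ℚ_p⁴ of binary cubic forms over ℚ_p, normalized so that μ(ℤ_p⁴) = 1. For each natural number b, the set {v ∈ ℤ_p⁴ : v_p(Δ₃(v)) = b} is a finite union of orbits for the twisted GL₂(ℤ_p)-action, each with finite stabilizer; let N_b be the sum over these orbits of 1/#Stab_{GL₂(ℤ_p)}. Then the series Σ_{b≥0} N_b p^{−bs} converges and (1 − p⁻¹)(1 − p⁻²) · Σ_{b≥0} N_b p^{−bs} = ∫_{ℤ_p⁴} |Δ₃(v)|_p^{s−1} dμ(v), where |·|_p is the p-adic absolute value. -/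
open MeasureTheory

/-- The discriminant of the binary cubic form `a·x³ + b·x²y + c·xy² + d·y³`. -/
def disc3 {R : Type*} [CommRing R] (a b c d : R) : R :=
  b ^ 2 * c ^ 2 - 4 * a * c ^ 3 - 4 * b ^ 3 * d - 27 * a ^ 2 * d ^ 2 + 18 * a * b * c * d

/-- The twisted action of `GL₂(R)` on binary cubic forms, in coordinates:
`(g·f)(x,y) = det(g)⁻¹·f(g₁₁x + g₂₁y, g₁₂x + g₂₂y)` for `f ↔ (a,b,c,d)`. -/
def cubicAct {R : Type*} [CommRing R] (g : Matrix.GeneralLinearGroup (Fin 2) R)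
    (v : Fin 4 → R) : Fin 4 → R :=
  let α := (g : Matrix (Fin 2) (Fin 2) R) 0 0
  let β := (g : Matrix (Fin 2) (Fin 2) R) 0 1
  let γ := (g : Matrix (Fin 2) (Fin 2) R) 1 0
  let δ := (g : Matrix (Fin 2) (Fin 2) R) 1 1
  let e := Matrix.det (↑(g⁻¹) : Matrix (Fin 2) (Fin 2) R)
  ![e * (v 0 * α ^ 3 + v 1 * α ^ 2 * β + v 2 * α * β ^ 2 + v 3 * β ^ 3),
    e * (3 * v 0 * α ^ 2 * γ + v 1 * (α ^ 2 * δ + 2 * α * β * γ) +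
      v 2 * (β ^ 2 * γ + 2 * α * β * δ) + 3 * v 3 * β ^ 2 * δ),
    e * (3 * v 0 * α * γ ^ 2 + v 1 * (β * γ ^ 2 + 2 * α * γ * δ) +
      v 2 * (α * δ ^ 2 + 2 * β * γ * δ) + 3 * v 3 * β * δ ^ 2),
    e * (v 0 * γ ^ 3 + v 1 * γ ^ 2 * δ + v 2 * γ * δ ^ 2 + v 3 * δ ^ 3)]

/-- `N` is the weighted number of orbits of the twisted `GL₂(R)`-action on the set `S` of
binary cubic forms: `S` is a finite union of orbits, each with finite stabilizer, and `N`
is the sum over the orbits of `1/#Stab`. -/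
def IsWeightedGL2OrbitCount {R : Type*} [CommRing R] (S : Set (Fin 4 → R)) (N : ℝ) :
    Prop :=
  ∃ (m : ℕ) (reps : Fin m → (Fin 4 → R)),
    (∀ i, reps i ∈ S) ∧
    (∀ i j : Fin m, (∃ g, cubicAct g (reps i) = reps j) → i = j) ∧
    (∀ v ∈ S, ∃ i, ∃ g, cubicAct g (reps i) = v) ∧
    (∀ i, {g : Matrix.GeneralLinearGroup (Fin 2) R | cubicAct g (reps i) = reps i}.Finite) ∧
    N = ∑ i : Fin m,
      (1 : ℝ) / ({g : Matrix.GeneralLinearGroup (Fin 2) R |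
        cubicAct g (reps i) = reps i}.ncard)

/-!
Let `κ = (1 - p⁻¹)(1 - p⁻²)`, so that a principal congruence subgroup `K` of level `pⁿ` has index
`κ p⁴ⁿ` in `GL₂(ℤ_p)`. The differential of `g ↦ g • v` at the identity is a `4 × 4` matrix `L_v`
with `det L_v = Δ₃(v)`. If `n` exceeds the valuation of `Δ₃(v) ≠ 0`, Hensel's lemma shows that `K`
acts freely on its orbit of `v`, which is the coset `v + pⁿ L_v(ℤ_p⁴)` of measure
`p⁻⁴ⁿ |Δ₃(v)|`. Since `GL₂(ℤ_p)` preserves `|Δ₃|`, its orbit of `v` is a disjoint union of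
`[GL₂(ℤ_p) : K] / #Stab(v)` sets of this measure, and so has measure `κ |Δ₃(v)| / #Stab(v)`.
Summing over the orbits with `|Δ₃| = p⁻ᵇ` shows that this level set has measure `κ N_b p⁻ᵇ`, and
summing over `b` gives the integral, because `Δ₃` vanishes only on a null set.
-/

open scoped Matrix MatrixGroups

section PrincipalIdealRing

theorem exists_quotient_range_equiv_pi {R M : Type*} [CommRing R] [IsDomain R]
    [IsPrincipalIdealRing R] [AddCommGroup M] [Module R M] {ι : Type*} [Fintype ι]
    (b : Module.Basis ι R M) {T : M →ₗ[R] M} (hT : LinearMap.det T ≠ 0) :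
    ∃ a : ι → R, Associated (LinearMap.det T) (∏ i, a i) ∧
      Nonempty ((M ⧸ LinearMap.range T) ≃ₗ[R] ((i : ι) → R ⧸ Ideal.span {a i})) := by
  classical
  have : Module.Free R M := Module.Free.of_basis b
  have : Module.Finite R M := Module.Finite.of_basis b
  have hinj : Function.Injective T := by
    rw [← LinearMap.ker_eq_bot]
    by_contra hker
    exact hT (LinearMap.det_eq_zero_iff_ker_ne_bot.2 hker)
  let e := LinearEquiv.ofInjective T hinj
  have hrank : Module.finrank R (LinearMap.range T) = Module.finrank R M := e.symm.finrank_eq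
  let a := Submodule.smithNormalFormCoeffs b hrank
  let top := Submodule.smithNormalFormTopBasis b hrank
  let bot := Submodule.smithNormalFormBotBasis b hrank
  let D : M →ₗ[R] M := (LinearMap.range T).subtype ∘ₗ (top.equiv bot (Equiv.refl ι)).toLinearMap
  have hD (i : ι) : D (top i) = a i • top i := by
    change (top.equiv bot (Equiv.refl ι) (top i) : M) = _
    rw [Module.Basis.equiv_apply]
    exact Submodule.smithNormalFormBotBasis_def b hrank i
  have hdet : LinearMap.det D = ∏ i, a i := by
    rw [← LinearMap.det_toMatrix top, ← Matrix.det_diagonal]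
    congr 1
    ext i j
    rw [LinearMap.toMatrix_apply, hD, map_smul, Module.Basis.repr_self, Finsupp.smul_single,
      smul_eq_mul, mul_one, Matrix.diagonal_apply, Finsupp.single_apply]
    grind
  refine ⟨a, ?_, ⟨Submodule.quotientEquivPiSpan _ b hrank⟩⟩
  rw [← hdet]
  exact LinearMap.associated_det_comp_equiv (LinearMap.range T).subtype e _

end PrincipalIdealRing

section PadicMeasure

variable {p : ℕ} [Fact p.Prime]

theorem padicInt_card_quotient_span {a : ℤ_[p]} (ha : a ≠ 0) :
    (Nat.card (ℤ_[p] ⧸ Ideal.span {a}) : ℝ) = ‖a‖⁻¹ := by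
  have hker : Ideal.span {a} = RingHom.ker (PadicInt.toZModPow (p := p) a.valuation) := by
    rw [PadicInt.ker_toZModPow, Ideal.span_singleton_eq_span_singleton]
    refine ⟨(PadicInt.unitCoeff ha)⁻¹, ?_⟩
    rw [Units.mul_inv_eq_iff_eq_mul, mul_comm]
    exact PadicInt.unitCoeff_spec ha
  rw [hker, Nat.card_congr (RingHom.quotientKerEquivOfSurjective
    (ZMod.ringHom_surjective (PadicInt.toZModPow a.valuation))).toEquiv, Nat.card_zmod,
    PadicInt.norm_eq_zpow_neg_valuation ha]
  simp

theorem padicInt_norm_eq_of_associated {a b : ℤ_[p]} (h : Associated a b) : ‖a‖ = ‖b‖ := by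
  obtain ⟨u, rfl⟩ := h
  rw [norm_mul, PadicInt.norm_units, mul_one]

variable {ι : Type*}

theorem padicInt_card_quotient_range [Finite ι] {T : (ι → ℤ_[p]) →ₗ[ℤ_[p]] (ι → ℤ_[p])}
    (hT : LinearMap.det T ≠ 0) :
    (Nat.card ((ι → ℤ_[p]) ⧸ LinearMap.range T) : ℝ) = ‖LinearMap.det T‖⁻¹ := by
  have := Fintype.ofFinite ι
  obtain ⟨a, hdet, ⟨e⟩⟩ := exists_quotient_range_equiv_pi (Pi.basisFun ℤ_[p] ι) hT
  have ha : ∏ i, a i ≠ 0 := fun h => hT (hdet.eq_zero_iff.2 h)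
  rw [Nat.card_congr e.toEquiv, Nat.card_pi, padicInt_norm_eq_of_associated hdet, norm_prod,
    ← Finset.prod_inv_distrib, Nat.cast_prod]
  exact Finset.prod_congr rfl fun i _ =>
    padicInt_card_quotient_span (Finset.prod_ne_zero_iff.1 ha i (Finset.mem_univ i))

variable [Fintype ι]

theorem measurableSet_range_add_mulVec [MeasurableSpace (ι → ℤ_[p])] [BorelSpace (ι → ℤ_[p])]
    (A : Matrix ι ι ℤ_[p]) (v : ι → ℤ_[p]) :
    MeasurableSet (Set.range fun Y => v + A.mulVec Y) :=
  (isCompact_range (by fun_prop)).isClosed.measurableSet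

theorem measureReal_range_add_mulVec [DecidableEq ι] [MeasurableSpace (ι → ℤ_[p])]
    [BorelSpace (ι → ℤ_[p])]
    (ν : Measure (ι → ℤ_[p])) [ν.IsAddLeftInvariant] [IsProbabilityMeasure ν]
    {A : Matrix ι ι ℤ_[p]} (hA : A.det ≠ 0) (v : ι → ℤ_[p]) :
    ν.real (Set.range fun Y => v + A.mulVec Y) = ‖A.det‖ := by
  let H := (LinearMap.range (Matrix.toLin' A)).toAddSubgroup
  have hH : (H : Set (ι → ℤ_[p])) = Set.range A.mulVec := by
    ext w
    simp [H]
  have hrange : (Set.range fun Y => v + A.mulVec Y) = (fun w => -v + w) ⁻¹' H := by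
    rw [hH]
    ext w
    simp [eq_neg_add_iff_add_eq]
  have hmeas : MeasurableSet (H : Set (ι → ℤ_[p])) := by
    simpa [hH] using measurableSet_range_add_mulVec A 0
  have hindex : (H.index : ℝ) = ‖A.det‖⁻¹ := by
    rw [← LinearMap.det_toLin'] at hA ⊢
    exact padicInt_card_quotient_range hA
  have : H.FiniteIndex := ⟨fun h => by simp [h, eq_comm, hA] at hindex⟩
  have hmass := congrArg ENNReal.toReal (AddSubgroup.index_mul_measure H hmeas ν)
  rw [ENNReal.toReal_mul, ENNReal.toReal_natCast, hindex, measure_univ, ENNReal.toReal_one] at hmass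
  rw [hrange, measureReal_def, measure_preimage_add]
  exact ((inv_mul_eq_one₀ (norm_ne_zero_iff.2 hA)).1 hmass).symm

end PadicMeasure

section PadicHensel

variable {p : ℕ} [Fact p.Prime] {ι : Type*} [Fintype ι]

theorem mvPolynomial_lipschitzWith_one_eval (P : MvPolynomial ι ℤ_[p]) :
    LipschitzWith 1 fun x => MvPolynomial.eval x P := by
  refine LipschitzWith.of_dist_le_mul fun x y => ?_
  rw [NNReal.coe_one, one_mul, dist_eq_norm, dist_eq_norm]
  induction P using MvPolynomial.induction_on with
  | C a => simp
  | add P Q hP hQ =>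
    simp only [map_add, add_sub_add_comm]
    exact (PadicInt.nonarchimedean _ _).trans (max_le hP hQ)
  | mul_X P i hP =>
    simp only [map_mul, MvPolynomial.eval_X]
    have hsplit : MvPolynomial.eval x P * x i - MvPolynomial.eval y P * y i =
        MvPolynomial.eval x P * (x - y) i +
          (MvPolynomial.eval x P - MvPolynomial.eval y P) * y i := by
      rw [Pi.sub_apply]
      ring
    rw [hsplit]
    refine (PadicInt.nonarchimedean _ _).trans (max_le ?_ ?_) <;> rw [norm_mul]
    · exact (mul_le_of_le_one_left (norm_nonneg _) (PadicInt.norm_le_one _)).trans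
        (norm_le_pi_norm (x - y) i)
    · exact (mul_le_of_le_one_right (norm_nonneg _) (PadicInt.norm_le_one _)).trans hP

theorem padicInt_norm_mulVec_le (A : Matrix ι ι ℤ_[p]) (x : ι → ℤ_[p]) : ‖A.mulVec x‖ ≤ ‖x‖ := by
  refine (pi_norm_le_iff_of_nonneg (norm_nonneg x)).2 fun i => ?_
  refine IsUltrametricDist.norm_sum_le_of_forall_le_of_nonneg (norm_nonneg x) fun j _ => ?_
  rw [norm_mul]
  exact (mul_le_of_le_one_left (norm_nonneg _) (PadicInt.norm_le_one _)).trans (norm_le_pi_norm x j)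

-- Solutions are the fixed points of the contraction `X ↦ Y - (q / det A) • adj A *ᵥ r X`.
theorem existsUnique_mulVec_add_smul_eq [DecidableEq ι] {A : Matrix ι ι ℤ_[p]} (hA : A.det ≠ 0)
    {q : ℤ_[p]} (hq : (p : ℤ_[p]) * A.det ∣ q) {r : (ι → ℤ_[p]) → ι → ℤ_[p]}
    (hr : LipschitzWith 1 r) (Y : ι → ℤ_[p]) :
    ∃! X, A.mulVec X + q • r X = A.mulVec Y := by
  obtain ⟨c, rfl⟩ := hq
  let F : (ι → ℤ_[p]) → ι → ℤ_[p] := fun X => Y - (p * c : ℤ_[p]) • A.adjugate.mulVec (r X)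
  have hAF (X : ι → ℤ_[p]) : A.mulVec (F X) = A.mulVec Y - ((p : ℤ_[p]) * A.det * c) • r X := by
    rw [Matrix.mulVec_sub, Matrix.mulVec_smul, Matrix.mulVec_mulVec, Matrix.mul_adjugate,
      Matrix.smul_mulVec, Matrix.one_mulVec, smul_smul, mul_right_comm]
  have hfix (X : ι → ℤ_[p]) :
      A.mulVec X + ((p : ℤ_[p]) * A.det * c) • r X = A.mulVec Y ↔ Function.IsFixedPt F X := by
    rw [← eq_sub_iff_add_eq, ← hAF, Function.IsFixedPt, eq_comm]
    have hinj : Function.Injective A.mulVecLin :=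
      (injective_iff_map_eq_zero A.mulVecLin).2 fun _ => Matrix.eq_zero_of_mulVec_eq_zero hA
    exact hinj.eq_iff
  have hcontr : ContractingWith ‖(p : ℤ_[p])‖₊ F := by
    refine ⟨PadicInt.norm_p.trans_lt (inv_lt_one_of_one_lt₀
      (mod_cast (Fact.out : p.Prime).one_lt)), LipschitzWith.of_dist_le_mul fun X X' => ?_⟩
    rw [dist_sub_left, dist_eq_norm, ← smul_sub, ← Matrix.mulVec_sub, mul_smul, norm_smul]
    refine mul_le_mul_of_nonneg_left ?_ (norm_nonneg _)
    calc ‖c • A.adjugate.mulVec (r X - r X')‖ ≤ ‖r X - r X'‖ := by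
          rw [norm_smul]
          exact (mul_le_of_le_one_left (norm_nonneg _) (PadicInt.norm_le_one c)).trans
            (padicInt_norm_mulVec_le _ _)
      _ ≤ dist X X' := by
          simpa [dist_eq_norm] using hr.dist_le_mul X X'
  simp only [hfix]
  exact ⟨_, hcontr.fixedPoint_isFixedPt, fun X hX => hcontr.fixedPoint_unique hX⟩

end PadicHensel

section CubicForms

variable {R : Type*} [CommRing R]

/-- The discriminant `Δ₃` as a function of the coefficient vector. -/
def cubicDisc (v : Fin 4 → R) : R := disc3 (v 0) (v 1) (v 2) (v 3)

/-- The coefficients of `f(M₁₁x + M₂₁y, M₁₂x + M₂₂y)`, for a cubic form `f` with coefficient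
vector `v`; this is the action of `GL₂` without its determinant twist, and makes sense for every
matrix `M`. -/
def cubicSubst (M : Matrix (Fin 2) (Fin 2) R) (v : Fin 4 → R) : Fin 4 → R :=
  ![v 0 * M 0 0 ^ 3 + v 1 * M 0 0 ^ 2 * M 0 1 + v 2 * M 0 0 * M 0 1 ^ 2 + v 3 * M 0 1 ^ 3,
    3 * v 0 * M 0 0 ^ 2 * M 1 0 + v 1 * (M 0 0 ^ 2 * M 1 1 + 2 * M 0 0 * M 0 1 * M 1 0) +
      v 2 * (M 0 1 ^ 2 * M 1 0 + 2 * M 0 0 * M 0 1 * M 1 1) + 3 * v 3 * M 0 1 ^ 2 * M 1 1,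
    3 * v 0 * M 0 0 * M 1 0 ^ 2 + v 1 * (M 0 1 * M 1 0 ^ 2 + 2 * M 0 0 * M 1 0 * M 1 1) +
      v 2 * (M 0 0 * M 1 1 ^ 2 + 2 * M 0 1 * M 1 0 * M 1 1) + 3 * v 3 * M 0 1 * M 1 1 ^ 2,
    v 0 * M 1 0 ^ 3 + v 1 * M 1 0 ^ 2 * M 1 1 + v 2 * M 1 0 * M 1 1 ^ 2 + v 3 * M 1 1 ^ 3]

theorem cubicSubst_one (v : Fin 4 → R) : cubicSubst 1 v = v := by
  ext i
  fin_cases i <;> simp [cubicSubst]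

theorem cubicSubst_mul (M N : Matrix (Fin 2) (Fin 2) R) (v : Fin 4 → R) :
    cubicSubst (M * N) v = cubicSubst M (cubicSubst N v) := by
  ext i
  fin_cases i <;> simp [cubicSubst, Matrix.mul_apply, Fin.sum_univ_two] <;> ring

theorem cubicSubst_smul (M : Matrix (Fin 2) (Fin 2) R) (c : R) (v : Fin 4 → R) :
    cubicSubst M (c • v) = c • cubicSubst M v := by
  ext i
  fin_cases i <;> simp [cubicSubst] <;> ring

theorem cubicDisc_cubicSubst (M : Matrix (Fin 2) (Fin 2) R) (v : Fin 4 → R) :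
    cubicDisc (cubicSubst M v) = M.det ^ 6 * cubicDisc v := by
  simp [cubicDisc, disc3, cubicSubst, Matrix.det_fin_two]
  ring

theorem cubicDisc_smul (c : R) (v : Fin 4 → R) : cubicDisc (c • v) = c ^ 4 * cubicDisc v := by
  simp only [cubicDisc, disc3, Pi.smul_apply, smul_eq_mul]
  ring

theorem map_cubicDisc {S : Type*} [CommRing S] (f : R →+* S) (v : Fin 4 → R) :
    cubicDisc (f ∘ v) = f (cubicDisc v) := by
  simp [cubicDisc, disc3, map_ofNat]

theorem cubicAct_eq_smul_cubicSubst (g : GL (Fin 2) R) (v : Fin 4 → R) :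
    cubicAct g v = (g⁻¹).det • cubicSubst g v := by
  ext i
  fin_cases i <;> simp [cubicAct, cubicSubst, Units.smul_def, mul_add]

/-- The twisted action of `GL₂(R)` on coefficient vectors of binary cubic forms. -/
instance cubicMulAction : MulAction (GL (Fin 2) R) (Fin 4 → R) where
  smul := cubicAct
  one_smul v := by
    change cubicAct 1 v = v
    rw [cubicAct_eq_smul_cubicSubst, inv_one, map_one, one_smul, Units.val_one, cubicSubst_one]
  mul_smul g h v := by
    change cubicAct (g * h) v = cubicAct g (cubicAct h v)
    simp only [cubicAct_eq_smul_cubicSubst, mul_inv_rev, map_mul, Units.val_mul, cubicSubst_mul,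
      Units.smul_def, cubicSubst_smul, smul_smul, mul_comm]

theorem det_smul_smul (g : GL (Fin 2) R) (v : Fin 4 → R) : g.det • g • v = cubicSubst g v := by
  change g.det • cubicAct g v = _
  rw [cubicAct_eq_smul_cubicSubst, map_inv, smul_inv_smul]

theorem cubicDisc_smul_GL (g : GL (Fin 2) R) (v : Fin 4 → R) :
    cubicDisc (g • v) = (g.det : R) ^ 2 * cubicDisc v := by
  have h : (g.det : R) ^ 4 * cubicDisc (g • v) =
      (g.det : R) ^ 4 * ((g.det : R) ^ 2 * cubicDisc v) := by
    rw [← cubicDisc_smul, ← Units.smul_def, det_smul_smul, cubicDisc_cubicSubst,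
      Matrix.GeneralLinearGroup.val_det_apply]
    ring
  exact (g.det.isUnit.pow 4).mul_right_injective h

/-- The differential at the identity of `g ↦ g • v`, with the entries of a tangent vector
`!![X₀, X₁; X₂, X₃]` listed as `![X₀, X₁, X₂, X₃]`. -/
def cubicDifferential (v : Fin 4 → R) : Matrix (Fin 4) (Fin 4) R :=
  !![2 * v 0, v 1, 0, -v 0;
     v 1, 2 * v 2, 3 * v 0, 0;
     0, 3 * v 3, 2 * v 1, v 2;
     -v 3, 0, v 2, 2 * v 3]

theorem det_cubicDifferential (v : Fin 4 → R) : (cubicDifferential v).det = cubicDisc v := by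
  simp [cubicDifferential, Matrix.det_succ_row_zero, Fin.sum_univ_succ, cubicDisc, disc3,
    Fin.succAbove]
  ring

/-- The part of `cubicSubst (1 + !![X 0, X 1; X 2, X 3]) v` that is quadratic in `X`. -/
def cubicQuadraticPart (v X : Fin 4 → R) : Fin 4 → R :=
  ![3 * v 0 * X 0 ^ 2 + 2 * v 1 * X 0 * X 1 + v 2 * X 1 ^ 2,
    6 * v 0 * X 0 * X 2 + v 1 * (X 0 ^ 2 + 2 * X 0 * X 3 + 2 * X 1 * X 2) +
      2 * v 2 * X 1 * (X 0 + X 3) + 3 * v 3 * X 1 ^ 2,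
    3 * v 0 * X 2 ^ 2 + 2 * v 1 * X 2 * (X 0 + X 3) +
      v 2 * (X 3 ^ 2 + 2 * X 0 * X 3 + 2 * X 1 * X 2) + 6 * v 3 * X 1 * X 3,
    v 1 * X 2 ^ 2 + 2 * v 2 * X 2 * X 3 + 3 * v 3 * X 3 ^ 2]

/-- The second-order error of the linearization of the action: for `g = 1 + q X`,
`g • v = v + q • l` if and only if `cubicDifferential v *ᵥ X + q • cubicRemainder q v l X = l`. -/
def cubicRemainder (q : R) (v l X : Fin 4 → R) : Fin 4 → R :=
  cubicQuadraticPart v X + q • cubicSubst !![X 0, X 1; X 2, X 3] v - (X 0 + X 3) • l -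
    (X 0 * X 3 - X 1 * X 2) • (v + q • l)

theorem cubicSubst_one_add_smul (q : R) (v l X : Fin 4 → R) :
    cubicSubst (1 + q • !![X 0, X 1; X 2, X 3]) v -
        (1 + q • !![X 0, X 1; X 2, X 3]).det • (v + q • l) =
      q • (cubicDifferential v *ᵥ X - l + q • cubicRemainder q v l X) := by
  ext i
  simp only [cubicRemainder, Pi.sub_apply, Pi.add_apply, Pi.smul_apply, smul_eq_mul]
  fin_cases i <;>
    simp [cubicSubst, cubicDifferential, cubicQuadraticPart, Matrix.det_fin_two, dotProduct,
      Fin.sum_univ_four, Matrix.mulVec] <;>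
    ring

theorem smul_eq_add_smul_iff [IsDomain R] {q : R} (hq : q ≠ 0) {g : GL (Fin 2) R} {X : Fin 4 → R}
    (hg : (g : Matrix (Fin 2) (Fin 2) R) = 1 + q • !![X 0, X 1; X 2, X 3]) (v l : Fin 4 → R) :
    g • v = v + q • l ↔ cubicDifferential v *ᵥ X + q • cubicRemainder q v l X = l := by
  have hexpand := cubicSubst_one_add_smul q v l X
  rw [← hg, ← det_smul_smul, ← Matrix.GeneralLinearGroup.val_det_apply, Units.smul_def, ← smul_sub]
    at hexpand
  rw [← sub_eq_zero, ← smul_eq_zero_iff_right g.det.ne_zero, hexpand, smul_eq_zero_iff_right hq,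
    sub_add_eq_add_sub, sub_eq_zero]

theorem smul_eq_add_smul_inv_det_smul {q : R} {g : GL (Fin 2) R} {X : Fin 4 → R}
    (hg : (g : Matrix (Fin 2) (Fin 2) R) = 1 + q • !![X 0, X 1; X 2, X 3]) (v : Fin 4 → R) :
    g • v = v + q • g.det⁻¹ • (cubicDifferential v *ᵥ X + q • cubicRemainder q v 0 X) := by
  have hexpand := cubicSubst_one_add_smul q v 0 X
  rw [← hg, ← det_smul_smul, ← Matrix.GeneralLinearGroup.val_det_apply, smul_zero, add_zero,
    sub_zero, ← Units.smul_def, sub_eq_iff_eq_add'] at hexpand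
  rw [smul_comm q, ← inv_smul_smul g.det (g • v), hexpand, smul_add, inv_smul_smul]

theorem cubicRemainder_zero_zero (q : R) (v : Fin 4 → R) : cubicRemainder q v 0 0 = 0 := by
  ext i
  fin_cases i <;> simp [cubicRemainder, cubicQuadraticPart, cubicSubst]

theorem map_cubicRemainder {S : Type*} [CommRing S] (f : R →+* S) (q : R) (v l X : Fin 4 → R)
    (i : Fin 4) :
    f (cubicRemainder q v l X i) = cubicRemainder (f q) (f ∘ v) (f ∘ l) (f ∘ X) i := by
  simp only [cubicRemainder, Pi.sub_apply, Pi.add_apply, Pi.smul_apply, smul_eq_mul, map_sub,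
    map_add, map_mul, Function.comp_apply]
  fin_cases i <;> simp [cubicQuadraticPart, cubicSubst, map_ofNat]

end CubicForms

section GeneralLinearGroup

variable {n R S : Type*} [Fintype n] [DecidableEq n] [CommRing R] [CommRing S]

theorem isUnit_of_isUnit_map_of_surjective [IsLocalRing R] [Nontrivial S] {f : R →+* S}
    (hf : Function.Surjective f) {M : Matrix n n R} (hM : IsUnit (f.mapMatrix M)) : IsUnit M := by
  have : IsLocalHom f := .of_surjective f hf
  rw [Matrix.isUnit_iff_isUnit_det] at hM ⊢
  rw [← RingHom.map_det] at hM
  exact isUnit_of_map_unit f _ hM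

theorem mapMatrix_surjective {f : R →+* S} (hf : Function.Surjective f) :
    Function.Surjective (f.mapMatrix : Matrix n n R →+* Matrix n n S) := fun M => by
  choose g hg using hf
  exact ⟨M.map g, Matrix.ext fun i j => hg (M i j)⟩

theorem mapGL_surjective [IsLocalRing R] [Nontrivial S] {f : R →+* S}
    (hf : Function.Surjective f) :
    Function.Surjective (Matrix.GeneralLinearGroup.map (n := n) f) := by
  intro g
  obtain ⟨M, hM⟩ := mapMatrix_surjective hf (g : Matrix n n S)
  obtain ⟨h, rfl⟩ := isUnit_of_isUnit_map_of_surjective hf (hM ▸ g.isUnit)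
  exact ⟨h, Units.ext hM⟩

theorem natCard_ker_mapGL [IsLocalRing R] [Nontrivial S] {f : R →+* S}
    (hf : Function.Surjective f) :
    Nat.card (Matrix.GeneralLinearGroup.map (n := n) f).ker =
      Nat.card (f.mapMatrix : Matrix n n R →+* Matrix n n S).toAddMonoidHom.ker := by
  refine Nat.card_eq_of_bijective
    (fun g => ⟨(g.1 : Matrix n n R) - 1, ?_⟩) ⟨fun g h hgh => ?_, fun M => ?_⟩
  · have hg : f.mapMatrix (g.1 : Matrix n n R) = 1 := congrArg Units.val g.2
    change f.mapMatrix _ = 0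
    rw [map_sub, hg, map_one, sub_self]
  · exact Subtype.ext (Units.ext (sub_left_injective (congrArg Subtype.val hgh)))
  · have hM : f.mapMatrix (1 + M.1) = 1 := by
      have hM0 : f.mapMatrix M.1 = 0 := M.2
      rw [map_add, hM0, map_one, add_zero]
    obtain ⟨g, hg⟩ := isUnit_of_isUnit_map_of_surjective hf (hM ▸ isUnit_one)
    exact ⟨⟨g, Units.ext (by simpa [hg] using hM)⟩, Subtype.ext (by simp [hg])⟩

theorem natCard_GL_mul_natCard_matrix [IsLocalRing R] [Nontrivial S] {f : R →+* S}
    (hf : Function.Surjective f) :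
    Nat.card (GL n R) * Nat.card (Matrix n n S) = Nat.card (GL n S) * Nat.card (Matrix n n R) := by
  have hGL := (Matrix.GeneralLinearGroup.map (n := n) f).ker.card_mul_index
  rw [Subgroup.index_ker, MonoidHom.range_eq_top.2 (mapGL_surjective hf), Subgroup.card_top] at hGL
  have hmat := (f.mapMatrix : Matrix n n R →+* Matrix n n S).toAddMonoidHom.ker.card_mul_index
  rw [AddSubgroup.index_ker, AddMonoidHom.range_eq_top.2 (mapMatrix_surjective hf),
    AddSubgroup.card_top] at hmat
  rw [← hGL, ← hmat, natCard_ker_mapGL hf]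
  ring

theorem natCard_GL_two_field (K : Type*) [Field K] [Finite K] :
    (Nat.card (GL (Fin 2) K) : ℝ) =
      ((Nat.card K : ℝ) ^ 2 - 1) * ((Nat.card K : ℝ) ^ 2 - Nat.card K) := by
  have := Fintype.ofFinite K
  have hcard : 1 ≤ Fintype.card K := Fintype.card_pos
  rw [Matrix.card_GL_field, Fin.prod_univ_two, Nat.card_eq_fintype_card, Fin.val_zero, Fin.val_one,
    pow_zero, pow_one, Nat.cast_mul, Nat.cast_sub (Nat.one_le_pow 2 _ hcard),
    Nat.cast_sub (Nat.le_self_pow two_ne_zero _), Nat.cast_pow, Nat.cast_one]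

end GeneralLinearGroup

section CongruenceSubgroup

variable {p : ℕ} [Fact p.Prime]

/-- The principal congruence subgroup of level `pⁿ` of `GL₂(ℤ_p)`. -/
noncomputable def principalCongruenceSubgroup (p : ℕ) [Fact p.Prime] (n : ℕ) :
    Subgroup (GL (Fin 2) ℤ_[p]) :=
  (Matrix.GeneralLinearGroup.map (PadicInt.toZModPow n)).ker

theorem mem_principalCongruenceSubgroup_iff {n : ℕ} {g : GL (Fin 2) ℤ_[p]} :
    g ∈ principalCongruenceSubgroup p n ↔ ∃ X : Fin 4 → ℤ_[p],
      (g : Matrix (Fin 2) (Fin 2) ℤ_[p]) = 1 + (p : ℤ_[p]) ^ n • !![X 0, X 1; X 2, X 3] := by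
  have hdvd : g ∈ principalCongruenceSubgroup p n ↔ ∀ i j, (p : ℤ_[p]) ^ n ∣ (g.1 - 1) i j := by
    simp only [← Ideal.mem_span_singleton, ← PadicInt.ker_toZModPow, RingHom.mem_ker]
    rw [principalCongruenceSubgroup, MonoidHom.mem_ker, ← Units.val_inj, Units.val_one,
      ← map_one (PadicInt.toZModPow (p := p) n).mapMatrix, ← sub_eq_zero]
    change (PadicInt.toZModPow n).mapMatrix g.1 - _ = 0 ↔ _
    rw [← map_sub, ← Matrix.ext_iff]
    rfl
  rw [hdvd]
  refine ⟨fun h => ?_, fun ⟨X, hX⟩ => ?_⟩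
  · choose M hM using h
    refine ⟨![M 0 0, M 0 1, M 1 0, M 1 1], ?_⟩
    rw [← sub_eq_iff_eq_add', Matrix.eta_fin_two (g.1 - 1)]
    simp [hM]
  · rw [hX, add_sub_cancel_left]
    exact fun i j => dvd_mul_right _ _

theorem isLocalRing_zmod_pow {n : ℕ} (hn : n ≠ 0) : IsLocalRing (ZMod (p ^ n)) :=
  have : Fact (1 < p ^ n) := ⟨Nat.one_lt_pow hn (Fact.out : p.Prime).one_lt⟩
  .of_surjective' (PadicInt.toZModPow (p := p) n) (ZMod.ringHom_surjective _)

theorem exists_mem_principalCongruenceSubgroup {n : ℕ} (hn : n ≠ 0) (X : Fin 4 → ℤ_[p]) :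
    ∃ g ∈ principalCongruenceSubgroup p n,
      (g : Matrix (Fin 2) (Fin 2) ℤ_[p]) = 1 + (p : ℤ_[p]) ^ n • !![X 0, X 1; X 2, X 3] := by
  have := isLocalRing_zmod_pow (p := p) hn
  have hpn : PadicInt.toZModPow (p := p) n ((p : ℤ_[p]) ^ n) = 0 := by
    rw [← RingHom.mem_ker, PadicInt.ker_toZModPow]
    exact Ideal.mem_span_singleton_self _
  have hone (M : Matrix (Fin 2) (Fin 2) ℤ_[p]) :
      (PadicInt.toZModPow n).mapMatrix (1 + (p : ℤ_[p]) ^ n • M) = 1 := by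
    rw [map_add, map_one, add_eq_left]
    ext i j
    simp only [RingHom.mapMatrix_apply, Matrix.map_apply, Matrix.smul_apply, smul_eq_mul, map_mul,
      hpn, zero_mul, Matrix.zero_apply]
  obtain ⟨g, hg⟩ := isUnit_of_isUnit_map_of_surjective (ZMod.ringHom_surjective _)
    (hone !![X 0, X 1; X 2, X 3] ▸ isUnit_one)
  exact ⟨g, mem_principalCongruenceSubgroup_iff.2 ⟨X, hg⟩, hg⟩

instance normal_principalCongruenceSubgroup (n : ℕ) : (principalCongruenceSubgroup p n).Normal :=
  MonoidHom.normal_ker _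

instance finiteIndex_principalCongruenceSubgroup (n : ℕ) :
    (principalCongruenceSubgroup p n).FiniteIndex :=
  Subgroup.finiteIndex_ker _

theorem index_principalCongruenceSubgroup {n : ℕ} (hn : n ≠ 0) :
    ((principalCongruenceSubgroup p n).index : ℝ) =
      (1 - (p : ℝ)⁻¹) * (1 - ((p : ℝ) ^ 2)⁻¹) * ((p : ℝ) ^ n) ^ 4 := by
  have := isLocalRing_zmod_pow (p := p) hn
  have hp : (p : ℝ) ≠ 0 := mod_cast (Fact.out : p.Prime).ne_zero
  have hmat (m : ℕ) : Nat.card (Matrix (Fin 2) (Fin 2) (ZMod m)) = m ^ 4 := by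
    simp [Matrix, Nat.card_fun, ← pow_mul]
  have hindex : (principalCongruenceSubgroup p n).index = Nat.card (GL (Fin 2) (ZMod (p ^ n))) := by
    rw [principalCongruenceSubgroup, Subgroup.index_ker,
      MonoidHom.range_eq_top.2 (mapGL_surjective (ZMod.ringHom_surjective _)), Subgroup.card_top]
  have hcard := natCard_GL_mul_natCard_matrix (n := Fin 2)
    (ZMod.ringHom_surjective (ZMod.castHom (dvd_pow_self p hn) (ZMod p)))
  rw [hmat, hmat, ← hindex] at hcard
  have hcard_real := congrArg (Nat.cast : ℕ → ℝ) hcard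
  push_cast [natCard_GL_two_field, Nat.card_zmod] at hcard_real
  refine mul_right_cancel₀ (pow_ne_zero 4 hp) (hcard_real.trans ?_)
  field_simp

end CongruenceSubgroup

section CongruenceOrbit

variable {p : ℕ} [Fact p.Prime]

theorem padicInt_p_mul_dvd_p_pow {x : ℤ_[p]} (hx : x ≠ 0) {n : ℕ} (hn : x.valuation < n) :
    (p : ℤ_[p]) * x ∣ (p : ℤ_[p]) ^ n := by
  rw [PadicInt.unitCoeff_spec hx, mul_left_comm, ← pow_succ', Units.mul_left_dvd]
  exact pow_dvd_pow _ hn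

theorem lipschitzWith_one_cubicRemainder (q : ℤ_[p]) (v l : Fin 4 → ℤ_[p]) :
    LipschitzWith 1 (cubicRemainder q v l) := by
  refine LipschitzWith.of_dist_le_mul fun X X' => ?_
  refine (dist_pi_le_iff (by positivity)).2 fun i => ?_
  let P : MvPolynomial (Fin 4) ℤ_[p] := cubicRemainder (.C q) (.C ∘ v) (.C ∘ l) .X i
  have hP (X : Fin 4 → ℤ_[p]) : cubicRemainder q v l X i = MvPolynomial.eval X P := by
    rw [map_cubicRemainder]
    simp [Function.comp_def]
  rw [hP, hP]
  exact (mvPolynomial_lipschitzWith_one_eval P).dist_le_mul X X'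

variable {v : Fin 4 → ℤ_[p]} {n : ℕ}

theorem existsUnique_cubicDifferential_mulVec_add (hv : cubicDisc v ≠ 0)
    (hn : (cubicDisc v).valuation < n) (l Y : Fin 4 → ℤ_[p]) :
    ∃! X, cubicDifferential v *ᵥ X + (p : ℤ_[p]) ^ n • cubicRemainder ((p : ℤ_[p]) ^ n) v l X =
      cubicDifferential v *ᵥ Y := by
  rw [← det_cubicDifferential] at hv hn
  exact existsUnique_mulVec_add_smul_eq hv (padicInt_p_mul_dvd_p_pow hv hn)
    (lipschitzWith_one_cubicRemainder _ v l) Y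

theorem p_pow_smul_mem_range_cubicDifferential (hv : cubicDisc v ≠ 0)
    (hn : (cubicDisc v).valuation < n) (w : Fin 4 → ℤ_[p]) :
    ∃ Y, cubicDifferential v *ᵥ Y = (p : ℤ_[p]) ^ n • w := by
  obtain ⟨c, hc⟩ := (dvd_mul_left _ _).trans (padicInt_p_mul_dvd_p_pow hv hn)
  refine ⟨c • (cubicDifferential v).adjugate *ᵥ w, ?_⟩
  rw [Matrix.mulVec_smul, Matrix.mulVec_mulVec, Matrix.mul_adjugate, det_cubicDifferential,
    Matrix.smul_mulVec, Matrix.one_mulVec, smul_smul, hc, mul_comm]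

theorem orbit_principalCongruenceSubgroup (hv : cubicDisc v ≠ 0)
    (hn : (cubicDisc v).valuation < n) :
    MulAction.orbit (principalCongruenceSubgroup p n) v =
      Set.range fun Y => v + ((p : ℤ_[p]) ^ n • cubicDifferential v) *ᵥ Y := by
  have hq : (p : ℤ_[p]) ^ n ≠ 0 := pow_ne_zero n (mod_cast (Fact.out : p.Prime).ne_zero)
  simp only [Matrix.smul_mulVec]
  refine Set.Subset.antisymm ?_ ?_
  · rintro _ ⟨⟨g, hg⟩, rfl⟩
    obtain ⟨X, hX⟩ := mem_principalCongruenceSubgroup_iff.1 hg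
    obtain ⟨Y, hY⟩ := p_pow_smul_mem_range_cubicDifferential hv hn
      (cubicRemainder ((p : ℤ_[p]) ^ n) v 0 X)
    refine ⟨g.det⁻¹ • (X + Y), ?_⟩
    change _ = g • v
    simp only [smul_eq_add_smul_inv_det_smul hX, Units.smul_def, Matrix.mulVec_smul,
      Matrix.mulVec_add, hY]
  · rintro _ ⟨Y, rfl⟩
    obtain ⟨X, hX, -⟩ :=
      existsUnique_cubicDifferential_mulVec_add hv hn (cubicDifferential v *ᵥ Y) Y
    obtain ⟨g, hgK, hg⟩ := exists_mem_principalCongruenceSubgroup (zero_le.trans_lt hn).ne' X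
    exact ⟨⟨g, hgK⟩, (smul_eq_add_smul_iff hq hg _ _).2 hX⟩

theorem principalCongruenceSubgroup_inf_stabilizer (hv : cubicDisc v ≠ 0)
    (hn : (cubicDisc v).valuation < n) :
    principalCongruenceSubgroup p n ⊓ MulAction.stabilizer (GL (Fin 2) ℤ_[p]) v = ⊥ := by
  have hq : (p : ℤ_[p]) ^ n ≠ 0 := pow_ne_zero n (mod_cast (Fact.out : p.Prime).ne_zero)
  refine (Subgroup.eq_bot_iff_forall _).2 fun g ⟨hgK, hgv⟩ => Units.ext ?_
  obtain ⟨X, hX⟩ := mem_principalCongruenceSubgroup_iff.1 hgK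
  have hsol := (smul_eq_add_smul_iff hq hX v 0).1 (by simpa using hgv)
  have hzero : X = 0 := (existsUnique_cubicDifferential_mulVec_add hv hn 0 0).unique
    (by simpa using hsol) (by simp [cubicRemainder_zero_zero])
  ext i j
  fin_cases i <;> fin_cases j <;> simp [hX, hzero]

end CongruenceOrbit

section OrbitMeasure

open MulAction

variable {G X : Type*} [Group G] [MulAction G X] {K : Subgroup G} [K.Normal] {x : X}

theorem orbit_smul_eq_orbit_smul_iff {a b : G} :
    orbit K (a • x) = orbit K (b • x) ↔ a⁻¹ * b ∈ K ⊔ stabilizer G x := by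
  rw [orbit_eq_iff, Subgroup.mem_sup_of_normal_left]
  constructor
  · rintro ⟨k, hk⟩
    refine ⟨_, ‹K.Normal›.conj_mem' _ (inv_mem k.2) a, a⁻¹ * k * b, ?_, by group⟩
    rw [mem_stabilizer_iff, mul_smul, mul_smul]
    exact inv_smul_eq_iff.2 hk
  · rintro ⟨k, hk, s, hs, hks⟩
    have hb : b = a * k * s := by rw [mul_assoc, hks, mul_inv_cancel_left]
    refine ⟨⟨_, ‹K.Normal›.conj_mem _ (inv_mem hk) a⟩, ?_⟩
    change (a * k⁻¹ * a⁻¹) • b • x = a • x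
    rw [hb, mul_smul _ s, hs, smul_smul]
    group

theorem iUnion_orbit_out_smul :
    ⋃ q : G ⧸ (K ⊔ stabilizer G x), orbit K (q.out • x) = orbit G x := by
  refine Set.Subset.antisymm (Set.iUnion_subset fun q => ?_) ?_
  · rintro _ ⟨k, rfl⟩
    exact ⟨k * q.out, mul_smul _ _ _⟩
  · rintro _ ⟨g, rfl⟩
    have horbit : orbit K ((g : G ⧸ (K ⊔ stabilizer G x)).out • x) = orbit K (g • x) :=
      orbit_smul_eq_orbit_smul_iff.2 (QuotientGroup.eq.1 (QuotientGroup.out_eq' _))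
    exact Set.mem_iUnion.2 ⟨g, horbit ▸ mem_orbit_self _⟩

theorem pairwise_disjoint_orbit_out_smul :
    Pairwise (Function.onFun Disjoint fun q : G ⧸ (K ⊔ stabilizer G x) => orbit K (q.out • x)) := by
  intro q r hqr
  refine (orbit.eq_or_disjoint _ _).resolve_left fun horbit => hqr ?_
  rw [← QuotientGroup.out_eq' q, ← QuotientGroup.out_eq' r]
  exact QuotientGroup.eq.2 (orbit_smul_eq_orbit_smul_iff.1 horbit)

theorem index_sup_mul_natCard {S : Subgroup G} (hKS : K ⊓ S = ⊥) :
    (K ⊔ S).index * Nat.card S = K.index := by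
  rw [← Subgroup.relIndex_mul_index (le_sup_left : K ≤ K ⊔ S), Subgroup.relIndex_sup_left,
    ← Subgroup.inf_relIndex_right, hKS, Subgroup.relIndex_bot_left, mul_comm]

theorem finite_of_inf_eq_bot [K.FiniteIndex] {S : Subgroup G} (hKS : K ⊓ S = ⊥) : Finite S :=
  Nat.finite_of_card_ne_zero
    (right_ne_zero_of_mul (index_sup_mul_natCard hKS ▸ Subgroup.FiniteIndex.index_ne_zero))

theorem measureReal_orbit_mul_natCard_stabilizer [MeasurableSpace X] [K.FiniteIndex]
    (hK : K ⊓ stabilizer G x = ⊥) (hmeas : ∀ g : G, MeasurableSet (orbit K (g • x)))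
    (ν : Measure X) [IsFiniteMeasure ν] {c : ℝ} (hc : ∀ g : G, ν.real (orbit K (g • x)) = c) :
    ν.real (orbit G x) * Nat.card (stabilizer G x) = K.index * c := by
  have : (K ⊔ stabilizer G x).FiniteIndex := Subgroup.finiteIndex_of_le le_sup_left
  have := Fintype.ofFinite (G ⧸ (K ⊔ stabilizer G x))
  rw [← iUnion_orbit_out_smul (K := K),
    measureReal_iUnion_fintype pairwise_disjoint_orbit_out_smul fun q => hmeas _,
    ← index_sup_mul_natCard hK, Subgroup.index,
    Nat.card_eq_fintype_card (α := G ⧸ _)]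
  simp only [hc, Finset.sum_const, Finset.card_univ, nsmul_eq_mul, Nat.cast_mul]
  ring

end OrbitMeasure

section FiniteOrbits

open MulAction

variable {G X : Type*} [Group G] [MulAction G X]

theorem finite_image_orbit_of_le_measureReal [MeasurableSpace X] (ν : Measure X) [IsFiniteMeasure ν]
    {S : Set X} {ε : ℝ} (hε : 0 < ε)
    (hS : ∀ x ∈ S, MeasurableSet (orbit G x) ∧ ε ≤ ν.real (orbit G x)) :
    (orbit G '' S).Finite := by
  have hmeas : ∀ ω : orbit G '' S, MeasurableSet (ω : Set X) := by
    rintro ⟨_, x, hx, rfl⟩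
    exact (hS x hx).1
  have hdisjoint : Pairwise (Function.onFun Disjoint fun ω : orbit G '' S => (ω : Set X)) := by
    rintro ⟨_, x, _, rfl⟩ ⟨_, y, _, rfl⟩ hxy
    exact (orbit.eq_or_disjoint x y).resolve_left (Subtype.coe_ne_coe.2 hxy)
  have hfinite := Measure.finite_const_le_meas_of_disjoint_iUnion ν (ENNReal.ofReal_pos.2 hε)
    hmeas hdisjoint (measure_ne_top _ _)
  refine Set.finite_coe_iff.1 (Set.finite_univ_iff.1 (hfinite.subset ?_))
  rintro ⟨_, x, hx, rfl⟩ -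
  exact (ENNReal.ofReal_le_iff_le_toReal (measure_ne_top _ _)).2 (hS x hx).2

end FiniteOrbits

section WeightedOrbitCount

open MulAction

variable {R : Type*} [CommRing R] {S : Set (Fin 4 → R)}

theorem exists_isWeightedGL2OrbitCount (hfinite : (orbit (GL (Fin 2) R) '' S).Finite)
    (hstab : ∀ v ∈ S, Finite (stabilizer (GL (Fin 2) R) v)) :
    ∃ N, IsWeightedGL2OrbitCount S N := by
  obtain ⟨T, hTS, hT⟩ := S.exists_subset_bijOn (orbit (GL (Fin 2) R))
  have : Finite T := hT.finite_iff_finite.2 hfinite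
  let e := (Finite.equivFin T).symm
  refine ⟨_, Nat.card T, fun i => e i, fun i => hTS (e i).2, ?_, ?_, ?_, rfl⟩
  · rintro i j ⟨g, hg⟩
    exact e.injective (Subtype.ext
      (hT.injOn (e i).2 (e j).2 (orbit_eq_iff.2 ⟨g, hg⟩).symm))
  · intro v hv
    obtain ⟨w, hw, hwv⟩ := hT.surjOn ⟨v, hv, rfl⟩
    obtain ⟨g, hg⟩ := orbit_eq_iff.1 hwv.symm
    refine ⟨e.symm ⟨w, hw⟩, g, ?_⟩
    simp only [Equiv.apply_symm_apply]
    exact hg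
  · exact fun i => hstab _ (hTS (e i).2)

theorem measureReal_eq_mul_of_isWeightedGL2OrbitCount [MeasurableSpace (Fin 4 → R)]
    (ν : Measure (Fin 4 → R)) [IsFiniteMeasure ν] {N c : ℝ} (hN : IsWeightedGL2OrbitCount S N)
    (hS : ∀ (g : GL (Fin 2) R), ∀ v ∈ S, g • v ∈ S)
    (hmeas : ∀ v ∈ S, MeasurableSet (orbit (GL (Fin 2) R) v))
    (hc : ∀ v ∈ S,
      ν.real (orbit (GL (Fin 2) R) v) * Nat.card (stabilizer (GL (Fin 2) R) v) = c) :
    ν.real S = c * N := by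
  obtain ⟨m, reps, hreps, hinj, hcover, hfinite, rfl⟩ := hN
  have hunion : ⋃ i, orbit (GL (Fin 2) R) (reps i) = S := by
    refine Set.Subset.antisymm (Set.iUnion_subset fun i => ?_) fun v hv => ?_
    · rintro _ ⟨g, rfl⟩
      exact hS g _ (hreps i)
    · exact Set.mem_iUnion.2 (hcover v hv)
  have hdisjoint : Pairwise (Function.onFun Disjoint fun i => orbit (GL (Fin 2) R) (reps i)) :=
    fun i j hij => (orbit.eq_or_disjoint _ _).resolve_left fun h =>
      hij (hinj j i (orbit_eq_iff.1 h)).symm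
  rw [← hunion, measureReal_iUnion_fintype hdisjoint fun i => hmeas _ (hreps i), Finset.mul_sum]
  refine Finset.sum_congr rfl fun i _ => ?_
  have : Finite (stabilizer (GL (Fin 2) R) (reps i)) := hfinite i
  rw [← hc _ (hreps i), mul_one_div]
  exact (mul_div_cancel_right₀ _ (mod_cast Nat.card_pos.ne')).symm

end WeightedOrbitCount

section PadicOrbits

open MulAction

variable {p : ℕ} [Fact p.Prime]

theorem norm_cubicDisc_smul_GL (g : GL (Fin 2) ℤ_[p]) (v : Fin 4 → ℤ_[p]) :
    ‖cubicDisc (g • v)‖ = ‖cubicDisc v‖ := by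
  rw [cubicDisc_smul_GL, norm_mul, norm_pow, PadicInt.norm_units, one_pow, one_mul]

theorem padicInt_norm_eq_zpow_iff {x : ℤ_[p]} {b : ℕ} :
    ‖x‖ = (p : ℝ) ^ (-b : ℤ) ↔ x ≠ 0 ∧ x.valuation = b := by
  have hp : (1 : ℝ) < p := mod_cast (Fact.out : p.Prime).one_lt
  constructor
  · intro hx
    have hx0 : x ≠ 0 := norm_ne_zero_iff.1 (hx ▸ (zpow_pos (one_pos.trans hp) _).ne')
    rw [PadicInt.norm_eq_zpow_neg_valuation hx0] at hx
    have hval := neg_injective (zpow_right_injective₀ (one_pos.trans hp) hp.ne' hx)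
    exact ⟨hx0, mod_cast hval⟩
  · rintro ⟨hx0, hx⟩
    rw [PadicInt.norm_eq_zpow_neg_valuation hx0, hx]

theorem finite_stabilizer_of_cubicDisc_ne_zero {v : Fin 4 → ℤ_[p]} (hv : cubicDisc v ≠ 0) :
    Finite (stabilizer (GL (Fin 2) ℤ_[p]) v) :=
  finite_of_inf_eq_bot (principalCongruenceSubgroup_inf_stabilizer hv (Nat.lt_succ_self _))

/-- The integral binary cubic forms whose discriminant has valuation `b`. -/
def cubicShell (p : ℕ) [Fact p.Prime] (b : ℕ) : Set (Fin 4 → ℤ_[p]) :=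
  {v | disc3 (v 0) (v 1) (v 2) (v 3) ≠ 0 ∧ (disc3 (v 0) (v 1) (v 2) (v 3)).valuation = (b : ℤ)}

theorem mem_cubicShell_iff {v : Fin 4 → ℤ_[p]} {b : ℕ} :
    v ∈ cubicShell p b ↔ ‖cubicDisc v‖ = (p : ℝ) ^ (-b : ℤ) := by
  rw [padicInt_norm_eq_zpow_iff, ← Nat.cast_inj (R := ℤ)]
  rfl

variable [MeasurableSpace (Fin 4 → ℤ_[p])] [BorelSpace (Fin 4 → ℤ_[p])]
  (ν : Measure (Fin 4 → ℤ_[p])) [ν.IsAddLeftInvariant] [IsProbabilityMeasure ν]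
  {v : Fin 4 → ℤ_[p]} {b : ℕ}

theorem measurableSet_orbit_principalCongruenceSubgroup (hv : ‖cubicDisc v‖ = (p : ℝ) ^ (-b : ℤ)) :
    MeasurableSet (orbit (principalCongruenceSubgroup p (b + 1)) v) := by
  obtain ⟨hv0, hval⟩ := padicInt_norm_eq_zpow_iff.1 hv
  rw [orbit_principalCongruenceSubgroup hv0 (by omega)]
  exact measurableSet_range_add_mulVec _ _

theorem measureReal_orbit_principalCongruenceSubgroup
    (hv : ‖cubicDisc v‖ = (p : ℝ) ^ (-b : ℤ)) :
    ν.real (orbit (principalCongruenceSubgroup p (b + 1)) v) =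
      (((p : ℝ) ^ (b + 1)) ^ 4)⁻¹ * (p : ℝ) ^ (-b : ℤ) := by
  obtain ⟨hv0, hval⟩ := padicInt_norm_eq_zpow_iff.1 hv
  have hdet : ((p : ℤ_[p]) ^ (b + 1) • cubicDifferential v).det =
      ((p : ℤ_[p]) ^ (b + 1)) ^ 4 * cubicDisc v := by
    rw [Matrix.det_smul, det_cubicDifferential, Fintype.card_fin]
  have hp : (p : ℤ_[p]) ≠ 0 := mod_cast (Fact.out : p.Prime).ne_zero
  rw [orbit_principalCongruenceSubgroup hv0 (by omega), measureReal_range_add_mulVec ν, hdet,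
    norm_mul, hv]
  · simp
  · rw [hdet]
    positivity

theorem measurableSet_orbit_GL (hv : ‖cubicDisc v‖ = (p : ℝ) ^ (-b : ℤ)) :
    MeasurableSet (orbit (GL (Fin 2) ℤ_[p]) v) := by
  rw [← iUnion_orbit_out_smul (K := principalCongruenceSubgroup p (b + 1))]
  have := Subgroup.finiteIndex_of_le
    (le_sup_left : principalCongruenceSubgroup p (b + 1) ≤ _ ⊔ stabilizer (GL (Fin 2) ℤ_[p]) v)
  exact .iUnion fun q => measurableSet_orbit_principalCongruenceSubgroup
    ((norm_cubicDisc_smul_GL _ v).trans hv)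

theorem le_measureReal_orbit_GL (hv : ‖cubicDisc v‖ = (p : ℝ) ^ (-b : ℤ)) :
    (((p : ℝ) ^ (b + 1)) ^ 4)⁻¹ * (p : ℝ) ^ (-b : ℤ) ≤ ν.real (orbit (GL (Fin 2) ℤ_[p]) v) := by
  rw [← measureReal_orbit_principalCongruenceSubgroup ν hv]
  refine measureReal_mono ?_
  rintro _ ⟨k, rfl⟩
  exact ⟨k, rfl⟩

theorem measureReal_orbit_GL_mul_natCard_stabilizer (hv : ‖cubicDisc v‖ = (p : ℝ) ^ (-b : ℤ)) :
    ν.real (orbit (GL (Fin 2) ℤ_[p]) v) * Nat.card (stabilizer (GL (Fin 2) ℤ_[p]) v) =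
      (1 - (p : ℝ)⁻¹) * (1 - ((p : ℝ) ^ 2)⁻¹) * (p : ℝ) ^ (-b : ℤ) := by
  have hp : (p : ℝ) ≠ 0 := mod_cast (Fact.out : p.Prime).ne_zero
  obtain ⟨hv0, hval⟩ := padicInt_norm_eq_zpow_iff.1 hv
  have hg (g : GL (Fin 2) ℤ_[p]) := (norm_cubicDisc_smul_GL g v).trans hv
  rw [measureReal_orbit_mul_natCard_stabilizer
    (principalCongruenceSubgroup_inf_stabilizer hv0 (Nat.lt_succ_of_le hval.le))
    (fun g => measurableSet_orbit_principalCongruenceSubgroup (hg g)) ν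
    (fun g => measureReal_orbit_principalCongruenceSubgroup ν (hg g)),
    index_principalCongruenceSubgroup b.succ_ne_zero, mul_assoc,
    mul_inv_cancel_left₀ (by positivity)]

theorem measureReal_cubicShell {N : ℝ} (hN : IsWeightedGL2OrbitCount (cubicShell p b) N) :
    ν.real (cubicShell p b) =
      (1 - (p : ℝ)⁻¹) * (1 - ((p : ℝ) ^ 2)⁻¹) * (p : ℝ) ^ (-b : ℤ) * N := by
  refine measureReal_eq_mul_of_isWeightedGL2OrbitCount ν hN (fun g v hv => ?_)
    (fun v hv => measurableSet_orbit_GL (mem_cubicShell_iff.1 hv))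
    (fun v hv => measureReal_orbit_GL_mul_natCard_stabilizer ν (mem_cubicShell_iff.1 hv))
  rw [mem_cubicShell_iff] at hv ⊢
  exact (norm_cubicDisc_smul_GL g v).trans hv

theorem exists_isWeightedGL2OrbitCount_cubicShell (p : ℕ) [Fact p.Prime] (b : ℕ) :
    ∃ N, IsWeightedGL2OrbitCount (cubicShell p b) N := by
  let _ : MeasurableSpace (Fin 4 → ℤ_[p]) := borel _
  have : BorelSpace (Fin 4 → ℤ_[p]) := ⟨rfl⟩
  let ν : Measure (Fin 4 → ℤ_[p]) := Measure.addHaarMeasure ⊤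
  have : IsProbabilityMeasure ν := ⟨Measure.addHaarMeasure_self⟩
  have hp : (0 : ℝ) < p := mod_cast (Fact.out : p.Prime).pos
  have hpos : 0 < (((p : ℝ) ^ (b + 1)) ^ 4)⁻¹ * (p : ℝ) ^ (-b : ℤ) := by positivity
  refine exists_isWeightedGL2OrbitCount
    (finite_image_orbit_of_le_measureReal ν hpos fun v hv => ?_)
    fun v hv => finite_stabilizer_of_cubicDisc_ne_zero hv.1
  rw [mem_cubicShell_iff] at hv
  exact ⟨measurableSet_orbit_GL hv, le_measureReal_orbit_GL ν hv⟩

end PadicOrbits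

section DiscriminantLocus

theorem measure_eq_zero_of_finite_nsmul_add_mem {G : Type*} [AddGroup G] [MeasurableSpace G]
    [MeasurableAdd G] (ν : Measure G) [IsFiniteMeasure ν] [ν.IsAddLeftInvariant] {Z : Set G}
    (hZ : NullMeasurableSet Z ν) (e : G) (hfinite : ∀ v, {n : ℕ | n • e + v ∈ Z}.Finite) :
    ν Z = 0 := by
  -- Poincaré recurrence: almost every point of `Z` returns to `Z` infinitely often.
  have hrecurrent :=
    (measurePreserving_add_left ν e).conservative.ae_mem_imp_frequently_image_mem hZ
  refine measure_eq_zero_iff_ae_notMem.2 (hrecurrent.mono fun v hv hvZ => ?_)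
  simp only [add_left_iterate] at hv
  exact Nat.frequently_atTop_iff_infinite.1 (hv hvZ) (hfinite v)

theorem finite_setOf_cubicDisc_nsmul_add_eq_zero {R : Type*} [CommRing R] [IsDomain R] [CharZero R]
    (v : Fin 4 → R) : {n : ℕ | cubicDisc (n • ![0, 1, 1, 0] + v) = 0}.Finite := by
  let P : Polynomial R :=
    disc3 (.C (v 0)) (.X + .C (v 1)) (.X + .C (v 2)) (.C (v 3))
  have hP : P.Monic := by
    unfold P disc3
    monicity!
  have hroots : {t : R | P.IsRoot t}.Finite := Polynomial.finite_setOfPred_isRoot hP.ne_zero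
  refine (hroots.preimage (f := Nat.cast) Nat.cast_injective.injOn).subset fun n hn => ?_
  simpa [P, cubicDisc, disc3, Polynomial.IsRoot] using hn

variable {p : ℕ} [Fact p.Prime] [MeasurableSpace (Fin 4 → ℤ_[p])] [BorelSpace (Fin 4 → ℤ_[p])]

theorem continuous_cubicDisc {R : Type*} [CommRing R] [TopologicalSpace R] [IsTopologicalRing R] :
    Continuous (cubicDisc : (Fin 4 → R) → R) := by
  unfold cubicDisc disc3
  fun_prop

theorem ae_cubicDisc_ne_zero (ν : Measure (Fin 4 → ℤ_[p])) [IsFiniteMeasure ν]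
    [ν.IsAddLeftInvariant] : ∀ᵐ v ∂ν, cubicDisc v ≠ 0 :=
  measure_eq_zero_iff_ae_notMem.1 <| measure_eq_zero_of_finite_nsmul_add_mem ν
    (isClosed_singleton.preimage continuous_cubicDisc).measurableSet.nullMeasurableSet
    ![0, 1, 1, 0] finite_setOf_cubicDisc_nsmul_add_eq_zero

end DiscriminantLocus

section LevelSets

variable {p : ℕ} [Fact p.Prime]

theorem hasSum_measureReal_norm_level_mul_rpow {X : Type*} [MeasurableSpace X] (ν : Measure X)
    {f : X → ℤ_[p]} (hmeas : ∀ b : ℕ, MeasurableSet {x | ‖f x‖ = (p : ℝ) ^ (-b : ℤ)})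
    (hf : ∀ᵐ x ∂ν, f x ≠ 0) {r : ℝ} (hint : Integrable (fun x => ‖f x‖ ^ r) ν) :
    HasSum (fun b : ℕ => ν.real {x | ‖f x‖ = (p : ℝ) ^ (-b : ℤ)} * (p : ℝ) ^ (-(b : ℝ) * r))
      (∫ x, ‖f x‖ ^ r ∂ν) := by
  have hp : (1 : ℝ) < p := mod_cast (Fact.out : p.Prime).one_lt
  have hdisjoint : Pairwise (Function.onFun Disjoint fun b : ℕ =>
      {x | ‖f x‖ = (p : ℝ) ^ (-b : ℤ)}) := fun b c hbc =>
    Set.disjoint_left.2 fun x hb hc => hbc <| Nat.cast_injective (R := ℤ) <| neg_injective <|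
      zpow_right_injective₀ (one_pos.trans hp) hp.ne' (hb.symm.trans hc)
  have hcover : ν.restrict (⋃ b : ℕ, {x | ‖f x‖ = (p : ℝ) ^ (-b : ℤ)}) = ν :=
    Measure.restrict_eq_self_of_ae_mem <| hf.mono fun x hx =>
      Set.mem_iUnion.2 ⟨(f x).valuation, PadicInt.norm_eq_zpow_neg_valuation hx⟩
  have hsum := hasSum_integral_iUnion hmeas hdisjoint hint.integrableOn
  rw [hcover] at hsum
  refine hsum.congr_fun fun b => ?_
  have hconst : ∀ x ∈ {x | ‖f x‖ = (p : ℝ) ^ (-b : ℤ)}, ‖f x‖ ^ r = (p : ℝ) ^ (-(b : ℝ) * r) := by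
    intro x hx
    rw [show ‖f x‖ = _ from hx, ← Real.rpow_intCast, ← Real.rpow_mul (zero_le_one.trans hp.le)]
    push_cast
    rfl
  rw [setIntegral_congr_fun (hmeas b) hconst, setIntegral_const, smul_eq_mul]

theorem hasSum_weightedOrbitCount_mul_rpow [MeasurableSpace (Fin 4 → ℤ_[p])]
    [BorelSpace (Fin 4 → ℤ_[p])] (ν : Measure (Fin 4 → ℤ_[p])) [ν.IsAddLeftInvariant]
    [IsProbabilityMeasure ν] {N : ℕ → ℝ}
    (hN : ∀ b, IsWeightedGL2OrbitCount (cubicShell p b) (N b)) {s : ℝ}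
    (hint : Integrable (fun v => ‖cubicDisc v‖ ^ (s - 1)) ν) :
    HasSum (fun b : ℕ => (1 - (p : ℝ)⁻¹) * (1 - ((p : ℝ) ^ 2)⁻¹) *
      (N b * (p : ℝ) ^ (-(b : ℝ) * s))) (∫ v, ‖cubicDisc v‖ ^ (s - 1) ∂ν) := by
  have hp : (0 : ℝ) < p := mod_cast (Fact.out : p.Prime).pos
  have hlevel (b : ℕ) : {v : Fin 4 → ℤ_[p] | ‖cubicDisc v‖ = (p : ℝ) ^ (-b : ℤ)} = cubicShell p b :=
    Set.ext fun v => mem_cubicShell_iff.symm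
  have hmeas (b : ℕ) :
      MeasurableSet {v : Fin 4 → ℤ_[p] | ‖cubicDisc v‖ = (p : ℝ) ^ (-b : ℤ)} :=
    (isClosed_singleton.preimage continuous_cubicDisc.norm).measurableSet
  refine (hasSum_measureReal_norm_level_mul_rpow ν hmeas (ae_cubicDisc_ne_zero ν) hint).congr_fun
    fun b => ?_
  have hpow : (p : ℝ) ^ (-(b : ℝ) * s) =
      (p : ℝ) ^ (-b : ℤ) * (p : ℝ) ^ (-(b : ℝ) * (s - 1)) := by
    rw [← Real.rpow_intCast, ← Real.rpow_add hp]
    push_cast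
    ring_nf
  rw [hlevel, measureReal_cubicShell ν (hN b), hpow]
  ring

end LevelSets

section PadicIntegralVectors

variable {p : ℕ} [Fact p.Prime] {ι : Type*}

/-- The inclusion of `ℤ_pⁿ` in `ℚ_pⁿ`, with coordinates indexed by `ι`. -/
noncomputable def padicIntVecCoe (p : ℕ) [Fact p.Prime] (ι : Type*) : (ι → ℤ_[p]) →+ (ι → ℚ_[p]) :=
  PadicInt.Coe.ringHom.toAddMonoidHom.compLeft ι

theorem range_padicIntVecCoe : Set.range (padicIntVecCoe p ι) = {v | ∀ i, ‖v i‖ ≤ 1} := by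
  refine Set.ext fun v => ⟨?_, fun hv => ⟨fun i => ⟨v i, hv i⟩, rfl⟩⟩
  rintro ⟨w, rfl⟩ i
  exact (w i).2

theorem measurableEmbedding_padicIntVecCoe [MeasurableSpace (ι → ℤ_[p])] [BorelSpace (ι → ℤ_[p])]
    [MeasurableSpace (ι → ℚ_[p])] [BorelSpace (ι → ℚ_[p])] :
    MeasurableEmbedding (padicIntVecCoe p ι) := by
  have hinj : Function.Injective (padicIntVecCoe p ι) := fun v w h =>
    funext fun i => Subtype.ext (congrFun h i)
  have hcont : Continuous (padicIntVecCoe p ι) :=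
    continuous_pi fun i => continuous_subtype_val.comp (continuous_apply i)
  exact (hcont.isClosedEmbedding hinj).measurableEmbedding

theorem norm_cubicDisc_padicIntVecCoe (v : Fin 4 → ℤ_[p]) :
    ‖cubicDisc (padicIntVecCoe p (Fin 4) v)‖ = ‖cubicDisc v‖ :=
  congrArg norm (map_cubicDisc PadicInt.Coe.ringHom v)

theorem integrableOn_norm_cubicDisc_rpow [MeasurableSpace (Fin 4 → ℚ_[p])]
    [BorelSpace (Fin 4 → ℚ_[p])] (μ : Measure (Fin 4 → ℚ_[p])) (hμ : μ {v | ∀ i, ‖v i‖ ≤ 1} ≠ ⊤)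
    {r : ℝ} (hr : 0 ≤ r) : IntegrableOn (fun v => ‖cubicDisc v‖ ^ r) {v | ∀ i, ‖v i‖ ≤ 1} μ := by
  have hcont : Continuous fun v : Fin 4 → ℚ_[p] => ‖cubicDisc v‖ ^ r :=
    continuous_cubicDisc.norm.rpow_const fun _ => .inr hr
  have hclosed : IsClosed {v : Fin 4 → ℚ_[p] | ∀ i, ‖v i‖ ≤ 1} := by
    simp only [Set.ofPred_forall]
    exact isClosed_iInter fun i => isClosed_le (by fun_prop) continuous_const
  refine Measure.integrableOn_of_bounded (M := 1) hμ hcont.aestronglyMeasurable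
    (ae_restrict_of_forall_mem hclosed.measurableSet ?_)
  rw [← range_padicIntVecCoe]
  rintro _ ⟨w, rfl⟩
  rw [norm_cubicDisc_padicIntVecCoe, Real.norm_of_nonneg (by positivity)]
  exact Real.rpow_le_one (norm_nonneg _) (PadicInt.norm_le_one _) hr

theorem isProbabilityMeasure_comap_padicIntVecCoe [MeasurableSpace (ι → ℤ_[p])]
    [BorelSpace (ι → ℤ_[p])] [MeasurableSpace (ι → ℚ_[p])] [BorelSpace (ι → ℚ_[p])]
    {μ : Measure (ι → ℚ_[p])} (hμ : μ {v | ∀ i, ‖v i‖ ≤ 1} = 1) :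
    IsProbabilityMeasure (μ.comap (padicIntVecCoe p ι)) :=
  ⟨by rw [measurableEmbedding_padicIntVecCoe.comap_apply, Set.image_univ, range_padicIntVecCoe, hμ]⟩

end PadicIntegralVectors

theorem igusa_zeta_eq_weighted_orbit_count_cubic_general (p : ℕ) [Fact p.Prime]
    [MeasurableSpace (Fin 4 → ℚ_[p])] [BorelSpace (Fin 4 → ℚ_[p])]
    (μ : Measure (Fin 4 → ℚ_[p])) [μ.IsAddLeftInvariant]
    (hμ : μ {v | ∀ i, ‖v i‖ ≤ 1} = 1) :
    ∃ N : ℕ → ℝ, (∀ b, IsWeightedGL2OrbitCount (cubicShell p b) (N b)) ∧ ∀ s : ℝ,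
      IntegrableOn (fun v => ‖cubicDisc v‖ ^ (s - 1)) {v | ∀ i, ‖v i‖ ≤ 1} μ →
      Summable (fun b : ℕ => N b * (p : ℝ) ^ (-(b : ℝ) * s)) ∧
      (1 - (p : ℝ)⁻¹) * (1 - ((p : ℝ) ^ 2)⁻¹) * ∑' b : ℕ, N b * (p : ℝ) ^ (-(b : ℝ) * s) =
        ∫ v in {v : Fin 4 → ℚ_[p] | ∀ i, ‖v i‖ ≤ 1}, ‖cubicDisc v‖ ^ (s - 1) ∂μ := by
  let _ : MeasurableSpace (Fin 4 → ℤ_[p]) := borel _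
  have : BorelSpace (Fin 4 → ℤ_[p]) := ⟨rfl⟩
  have hcoe := measurableEmbedding_padicIntVecCoe (p := p) (ι := Fin 4)
  let ν : Measure (Fin 4 → ℤ_[p]) := μ.comap (padicIntVecCoe p (Fin 4))
  have : ν.IsAddLeftInvariant := .comap μ hcoe
  have : IsProbabilityMeasure ν := isProbabilityMeasure_comap_padicIntVecCoe hμ
  have hp : (1 : ℝ) < p := mod_cast (Fact.out : p.Prime).one_lt
  have hvolume : (1 - (p : ℝ)⁻¹) * (1 - ((p : ℝ) ^ 2)⁻¹) ≠ 0 :=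
    mul_ne_zero (sub_ne_zero.2 (inv_lt_one_of_one_lt₀ hp).ne')
      (sub_ne_zero.2 (inv_lt_one_of_one_lt₀ (one_lt_pow₀ hp two_ne_zero)).ne')
  choose N hN using exists_isWeightedGL2OrbitCount_cubicShell p
  refine ⟨N, hN, fun s hint => ?_⟩
  rw [IntegrableOn, ← range_padicIntVecCoe, ← hcoe.map_comap, hcoe.integrable_map_iff] at hint
  simp only [Function.comp_def, norm_cubicDisc_padicIntVecCoe] at hint
  have hsum := hasSum_weightedOrbitCount_mul_rpow ν hN hint
  refine ⟨(summable_mul_left_iff hvolume).1 hsum.summable, ?_⟩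
  rw [← tsum_mul_left, hsum.tsum_eq, ← range_padicIntVecCoe, ← hcoe.map_comap, hcoe.integral_map]
  simp only [norm_cubicDisc_padicIntVecCoe, ν]

/-- **The orbit-counting interpretation of Igusa's zeta function for binary cubic forms.**
Let `p ∉ {2,3}` be a prime, `s ≥ 1` real, and `μ` an additive Haar (translation-invariant
Borel) measure on `ℚ_p⁴` with `μ(ℤ_p⁴) = 1`.  For each `b`, the set of `v ∈ ℤ_p⁴` with
`v_p(Δ₃(v)) = b` is a finite union of orbits of the twisted `GL₂(ℤ_p)`-action, each with
finite stabilizer; the weighted counts `N b` satisfy: the series `Σ_b N_b p^{−bs}`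
converges and `(1 − p⁻¹)(1 − p⁻²) · Σ_b N_b p^{−bs} = ∫_{ℤ_p⁴} |Δ₃(v)|^{s−1} dμ(v)`. -/
theorem igusa_zeta_eq_weighted_orbit_count_cubic (p : ℕ) [Fact p.Prime]
    (hp2 : p ≠ 2) (hp3 : p ≠ 3) (s : ℝ) (hs : 1 ≤ s)
    [MeasurableSpace (Fin 4 → ℚ_[p])] [BorelSpace (Fin 4 → ℚ_[p])]
    (μ : Measure (Fin 4 → ℚ_[p])) [μ.IsAddLeftInvariant]
    (hμ : μ {v | ∀ i, ‖v i‖ ≤ 1} = 1) :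
    ∃ N : ℕ → ℝ,
      (∀ b : ℕ, IsWeightedGL2OrbitCount
        {v : Fin 4 → ℤ_[p] | disc3 (v 0) (v 1) (v 2) (v 3) ≠ 0 ∧
          (disc3 (v 0) (v 1) (v 2) (v 3)).valuation = (b : ℤ)} (N b)) ∧
      Summable (fun b : ℕ => N b * (p : ℝ) ^ (-(b : ℝ) * s)) ∧
      (1 - (p : ℝ)⁻¹) * (1 - ((p : ℝ) ^ 2)⁻¹) *
          ∑' b : ℕ, N b * (p : ℝ) ^ (-(b : ℝ) * s) =
        ∫ v in {v : Fin 4 → ℚ_[p] | ∀ i, ‖v i‖ ≤ 1},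
          ‖disc3 (v 0) (v 1) (v 2) (v 3)‖ ^ (s - 1) ∂μ := by
  obtain ⟨N, hN, hzeta⟩ := igusa_zeta_eq_weighted_orbit_count_cubic_general p μ hμ
  exact ⟨N, hN, hzeta s (integrableOn_norm_cubicDisc_rpow μ (by simp [hμ]) (sub_nonneg.2 hs))⟩
end

section
/- Let p be a prime with p ∉ {2,3}, let s be a real number with s ≥ 1, and set t = p^{−s}. Let μ be a translation-invariant (additive Haar) Borel measure on ℚ_p⁴ normalized so that μ(ℤ_p⁴) = 1. Then ∫_{ℤ_p⁴} |Δ₃(v)|_p^{s−1} dμ(v) = (1 − p⁻¹)(1 − p⁻²) · (1 + t + t² + t³ + t⁴) / ((1 − t²)(1 − p·t⁶)), where |·|_p is the p-adic absolute value. -/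
open MeasureTheory

/-!
Split each coefficient of a form over `ℤ_p` into its units and `p ℤ_p`, and work with the exponent
`σ = s - 1`. If the leading coefficient is a unit, completing the cube turns the integral of `|Δ|^σ`
into the integral `J` of `|c³ + d²|^σ`. If `a ∈ p ℤ_p` and `b` is a unit, then `Δ` is modulo `p` a
linear polynomial in `d` with unit slope, so by Hensel's lemma the integral is `L = ∫ |x|^σ`. If
`p ∣ a` and `p ∣ b`, reversing the form lets the same two cases be applied at its other end, until
all four coefficients are divisible by `p` and the integral reappears, scaled by `|p|^(4σ)`.

The cusp integral satisfies `J - P² K = L - P² U L`, where `P = p⁻¹`, `U = |p|^σ` and `K` is its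
rescaling to `(p ℤ_p)²`: off `(p ℤ_p)²`, the integrals of `|c³ + d²|^σ` and of `|c + d²|^σ`
coincide, since for a unit `c` the substitution `d ↦ c d` turns `c³ + d²` into `c² (c + d²)`.
Resolving the cusp by alternately extracting `p` from `c` and `d` expresses `K` through `J`.
-/

open scoped ENNReal

namespace IgusaCubic

section Algebra

theorem disc3_mul {R : Type*} [CommRing R] (r a b c d : R) :
    disc3 (r * a) (r * b) (r * c) (r * d) = r ^ 4 * disc3 a b c d := by
  unfold disc3
  ring

theorem disc3_reverse {R : Type*} [CommRing R] (a b c d : R) : disc3 d c b a = disc3 a b c d := by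
  unfold disc3
  ring

theorem map_disc3 {R S F : Type*} [CommRing R] [CommRing S] [FunLike F R S] [RingHomClass F R S]
    (f : F) (a b c d : R) : f (disc3 a b c d) = disc3 (f a) (f b) (f c) (f d) := by
  simp only [disc3, map_add, map_sub, map_mul, map_pow, map_ofNat]

-- Cayley's syzygy between the leading coefficients of a cubic, its Hessian and its cubic covariant.
theorem disc3_completing_cube {R : Type*} [CommRing R] (a b c d : R) :
    -(2 ^ 4 * 3 ^ 3) * a ^ 2 * disc3 a b c d =
      (4 * (3 * a * c - b ^ 2)) ^ 3 + (4 * (27 * a ^ 2 * d - 9 * a * b * c + 2 * b ^ 3)) ^ 2 := by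
  unfold disc3
  ring

end Algebra

section Measure

theorem restrict_range_eq_smul_map {G H : Type*} [AddGroup G] [TopologicalSpace G]
    [IsTopologicalAddGroup G] [CompactSpace G] [MeasurableSpace G] [BorelSpace G]
    [AddGroup H] [MeasurableSpace H] [MeasurableAdd H]
    (ν : Measure G) [ν.IsAddHaarMeasure] [IsProbabilityMeasure ν]
    (μ : Measure H) [μ.IsAddLeftInvariant] {φ : G →+ H} (hφ : MeasurableEmbedding φ)
    (hμ : μ (Set.range φ) ≠ ∞) :
    μ.restrict (Set.range φ) = μ (Set.range φ) • ν.map φ := by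
  have hinv : (μ.comap φ).IsAddLeftInvariant := .comap μ hφ
  have huniv : μ.comap φ Set.univ = μ (Set.range φ) := by
    rw [hφ.comap_apply, Set.image_univ]
  have hfin : IsFiniteMeasure (μ.comap φ) := ⟨by rw [huniv]; exact hμ.lt_top⟩
  have hcomap : μ.comap φ = μ (Set.range φ) • ν := by
    have hsmul := Measure.isAddInvariant_eq_smul_of_compactSpace (μ.comap φ) ν
    have hscalar := congrArg (· Set.univ) hsmul
    simp only [Measure.smul_apply, measure_univ, huniv, ENNReal.smul_def, smul_eq_mul,
      mul_one] at hscalar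
    rw [hsmul, hscalar, ENNReal.smul_def]
  rw [← hφ.map_comap, hcomap, Measure.map_smul]

theorem measurable_vecCons {X : Type*} [MeasurableSpace X] {n : ℕ} (x : X) :
    Measurable (Matrix.vecCons x : (Fin n → X) → Fin (n + 1) → X) :=
  measurable_pi_lambda _ fun i ↦ i.cases measurable_const measurable_pi_apply

theorem lintegral_pi_fin_succ {X : Type*} [MeasurableSpace X] (ν : Measure X) [SigmaFinite ν]
    {n : ℕ} {f : (Fin (n + 1) → X) → ℝ≥0∞} (hf : Measurable f) :
    ∫⁻ v, f v ∂(Measure.pi fun _ ↦ ν) =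
      ∫⁻ x, ∫⁻ w, f (Matrix.vecCons x w) ∂(Measure.pi fun _ ↦ ν) ∂ν := by
  have hcons := (measurePreserving_piFinSuccAbove (fun _ : Fin (n + 1) ↦ ν) 0).symm
  rw [← hcons.lintegral_comp hf]
  refine (lintegral_prod (μ := ν) (ν := Measure.pi fun _ ↦ ν) _
    (hf.comp hcons.measurable).aemeasurable).trans ?_
  simp [Matrix.vecCons, Fin.consEquiv]

theorem lintegral_pi_fin_four {X : Type*} [MeasurableSpace X] (ν : Measure X) [SigmaFinite ν]
    {f : (Fin 4 → X) → ℝ≥0∞} (hf : Measurable f) :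
    ∫⁻ v, f v ∂(Measure.pi fun _ ↦ ν) = ∫⁻ a, ∫⁻ b, ∫⁻ c, ∫⁻ d, f ![a, b, c, d] ∂ν ∂ν ∂ν ∂ν := by
  rw [lintegral_pi_fin_succ ν hf]
  refine lintegral_congr fun a ↦ ?_
  have hfa := hf.comp (measurable_vecCons a)
  refine (lintegral_pi_fin_succ ν hfa).trans (lintegral_congr fun b ↦ ?_)
  have hfb := hfa.comp (measurable_vecCons b)
  refine (lintegral_pi_fin_succ ν hfb).trans (lintegral_congr fun c ↦ ?_)
  have hfc := hfb.comp (measurable_vecCons c)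
  refine (lintegral_pi_fin_succ ν hfc).trans (lintegral_congr fun d ↦ ?_)
  rw [Measure.pi_of_empty, lintegral_dirac]
  congr!

theorem lintegral_reverse₄ {α β γ δ : Type*} [MeasurableSpace α] [MeasurableSpace β]
    [MeasurableSpace γ] [MeasurableSpace δ] (κ : Measure α) (lam : Measure β) (μ : Measure γ)
    (ν : Measure δ) [SFinite κ] [SFinite lam] [SFinite μ] [SFinite ν]
    {F : α → β → γ → δ → ℝ≥0∞}
    (hF : Measurable fun q : (α × β) × (γ × δ) ↦ F q.1.1 q.1.2 q.2.1 q.2.2) :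
    ∫⁻ a, ∫⁻ b, ∫⁻ c, ∫⁻ d, F a b c d ∂ν ∂μ ∂lam ∂κ =
      ∫⁻ d, ∫⁻ c, ∫⁻ b, ∫⁻ a, F a b c d ∂κ ∂lam ∂μ ∂ν := by
  calc ∫⁻ a, ∫⁻ b, ∫⁻ c, ∫⁻ d, F a b c d ∂ν ∂μ ∂lam ∂κ
      = ∫⁻ x, ∫⁻ y, F x.1 x.2 y.1 y.2 ∂μ.prod ν ∂κ.prod lam := by
        rw [lintegral_prod _ hF.lintegral_prod_right'.aemeasurable]
        refine lintegral_congr fun a ↦ lintegral_congr fun b ↦ ?_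
        exact (lintegral_prod _ (hF.comp (measurable_prodMk_left (x := (a, b)))).aemeasurable).symm
    _ = ∫⁻ y, ∫⁻ x, F x.1 x.2 y.1 y.2 ∂κ.prod lam ∂μ.prod ν :=
        lintegral_lintegral_swap hF.aemeasurable
    _ = ∫⁻ d, ∫⁻ c, ∫⁻ b, ∫⁻ a, F a b c d ∂κ ∂lam ∂μ ∂ν := by
        rw [lintegral_prod_symm' _ hF.lintegral_prod_left']
        refine lintegral_congr fun d ↦ lintegral_congr fun c ↦ ?_
        exact lintegral_prod_symm' _ (hF.comp (measurable_prodMk_right (y := (c, d))))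

end Measure

section Norm

theorem enorm_mul_rpow {R : Type*} [SeminormedRing R] [NormMulClass R] (σ : ℝ) (x y : R) :
    ‖x * y‖ₑ ^ σ = ‖x‖ₑ ^ σ * ‖y‖ₑ ^ σ := by
  rw [enorm_mul, ENNReal.mul_rpow_of_ne_top enorm_ne_top enorm_ne_top]

variable {p : ℕ} [Fact p.Prime]

theorem isUnit_iff_not_p_dvd {x : ℤ_[p]} : IsUnit x ↔ ¬ (p : ℤ_[p]) ∣ x := by
  rw [← PadicInt.norm_lt_one_iff_dvd, ← PadicInt.not_isUnit_iff, not_not]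

theorem compl_setOf_isUnit_eq_range :
    {x : ℤ_[p] | IsUnit x}ᶜ = Set.range (AddMonoidHom.mulLeft (p : ℤ_[p])) := by
  ext x
  simp [isUnit_iff_not_p_dvd, dvd_def, eq_comm]

theorem isUnit_add_p_mul {x : ℤ_[p]} (hx : IsUnit x) (y : ℤ_[p]) : IsUnit (x + p * y) := by
  rw [isUnit_iff_not_p_dvd] at hx ⊢
  rwa [dvd_add_left (dvd_mul_right _ y)]

theorem enorm_rpow_of_isUnit (σ : ℝ) {x : ℤ_[p]} (hx : IsUnit x) : ‖x‖ₑ ^ σ = 1 := by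
  rw [← ofReal_norm, PadicInt.isUnit_iff.1 hx, ENNReal.ofReal_one, ENNReal.one_rpow]

theorem enorm_rpow_le_one {σ : ℝ} (hσ : 0 ≤ σ) (x : ℤ_[p]) : ‖x‖ₑ ^ σ ≤ 1 :=
  ENNReal.rpow_le_one (by simpa [← ofReal_norm] using x.norm_le_one) hσ

theorem enorm_p : ‖(p : ℤ_[p])‖ₑ = (p : ℝ≥0∞)⁻¹ := by
  rw [← ofReal_norm, PadicInt.norm_p,
    ENNReal.ofReal_inv_of_pos (mod_cast (Fact.out : p.Prime).pos), ENNReal.ofReal_natCast]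

theorem enorm_p_rpow_ne_top (σ : ℝ) : ‖(p : ℤ_[p])‖ₑ ^ σ ≠ ∞ :=
  ENNReal.rpow_ne_top_of_ne_zero (enorm_ne_zero.2 PadicInt.prime_p.ne_zero) enorm_ne_top

theorem toReal_enorm_p_rpow (σ : ℝ) : (‖(p : ℤ_[p])‖ₑ ^ σ).toReal = (p : ℝ)⁻¹ ^ σ := by
  rw [← ENNReal.toReal_rpow, toReal_enorm, PadicInt.norm_p]

theorem isUnit_two (hp2 : p ≠ 2) : IsUnit (2 : ℤ_[p]) := by
  rw [PadicInt.isUnit_iff]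
  exact_mod_cast PadicInt.norm_natCast_eq_one_iff.2
    ((Nat.coprime_primes Fact.out Nat.prime_two).2 hp2)

theorem isUnit_three (hp3 : p ≠ 3) : IsUnit (3 : ℤ_[p]) := by
  rw [PadicInt.isUnit_iff]
  exact_mod_cast PadicInt.norm_natCast_eq_one_iff.2
    ((Nat.coprime_primes Fact.out Nat.prime_three).2 hp3)

theorem isUnit_disc3_linear_coeff (hp2 : p ≠ 2) {b : ℤ_[p]} (hb : IsUnit b) (y : ℤ_[p]) :
    IsUnit (-(2 ^ 2) * b ^ 3 + p * y) :=
  isUnit_add_p_mul (((isUnit_two hp2).pow 2).neg.mul (hb.pow 3)) y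

theorem exists_root_quadratic (α : ℤ_[p]) {β : ℤ_[p]} (hβ : IsUnit β) (γ : ℤ_[p]) :
    ∃ z, α + β * z + p * γ * z ^ 2 = 0 := by
  obtain ⟨v, hv⟩ := hβ.exists_right_inv
  let F : Polynomial ℤ_[p] :=
    .C α + .C β * .X + .C (p * γ) * .X ^ 2
  have heval (z : ℤ_[p]) : F.aeval z = α + β * z + p * γ * z ^ 2 := by simp [F]
  have hderiv (z : ℤ_[p]) : F.derivative.aeval z = β + p * (2 * γ * z) := by
    simp [F]
    ring
  have hsmall : ‖F.aeval (-(v * α))‖ < ‖F.derivative.aeval (-(v * α))‖ ^ 2 := by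
    rw [hderiv, PadicInt.isUnit_iff.1 (isUnit_add_p_mul hβ _), heval, one_pow,
      PadicInt.norm_lt_one_iff_dvd]
    exact ⟨γ * (v * α) ^ 2, by linear_combination (-α) * hv⟩
  obtain ⟨z, hz, -⟩ := hensels_lemma hsmall
  exact ⟨z, heval z ▸ hz⟩

end Norm

section Haar

variable {p : ℕ} [Fact p.Prime] [MeasurableSpace ℤ_[p]]

section Defs

variable (ν : Measure ℤ_[p]) (σ : ℝ)

/-- The local zeta integral `∫ |x|^σ dx` of the coordinate function on `ℤ_p`. -/
noncomputable def normIntegral : ℝ≥0∞ := ∫⁻ x, ‖x‖ₑ ^ σ ∂ν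

/-- The local zeta integral `∫ |α c³ + β d²|^σ` of a cuspidal cubic on `ℤ_p²`; the coefficients
`α` and `β` record the powers of `p` produced by restricting `c` or `d` to `p ℤ_p`. -/
noncomputable def cuspIntegral (α β : ℤ_[p]) : ℝ≥0∞ :=
  ∫⁻ c, ∫⁻ d, ‖α * c ^ 3 + β * d ^ 2‖ₑ ^ σ ∂ν ∂ν

/-- The local zeta integral of the discriminant on the box of forms
`r₀ a x³ + r₁ b x²y + r₂ c xy² + r₃ d y³` with `a, b, c, d` in `ℤ_p`, the box having volume one. -/
noncomputable def discIntegral (r₀ r₁ r₂ r₃ : ℤ_[p]) : ℝ≥0∞ :=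
  ∫⁻ a, ∫⁻ b, ∫⁻ c, ∫⁻ d, ‖disc3 (r₀ * a) (r₁ * b) (r₂ * c) (r₃ * d)‖ₑ ^ σ ∂ν ∂ν ∂ν ∂ν

theorem cuspIntegral_p_mul (α β : ℤ_[p]) :
    cuspIntegral ν σ (p * α) (p * β) = ‖(p : ℤ_[p])‖ₑ ^ σ * cuspIntegral ν σ α β := by
  simp only [cuspIntegral, mul_assoc, ← mul_add, enorm_mul_rpow,
    lintegral_const_mul' _ _ (enorm_p_rpow_ne_top σ)]

theorem discIntegral_p :
    discIntegral ν σ p p p p = (‖(p : ℤ_[p])‖ₑ ^ σ) ^ 4 * discIntegral ν σ 1 1 1 1 := by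
  simp only [discIntegral, one_mul, disc3_mul, pow_succ, pow_zero, mul_assoc, enorm_mul_rpow,
    lintegral_const_mul' _ _ (enorm_p_rpow_ne_top σ)]

section Finiteness

variable {σ : ℝ} [IsProbabilityMeasure ν]

theorem normIntegral_ne_top (hσ : 0 ≤ σ) : normIntegral ν σ ≠ ∞ :=
  ne_top_of_le_ne_top ENNReal.one_ne_top <|
    lintegral_le_const (.of_forall fun x ↦ enorm_rpow_le_one hσ x)

theorem cuspIntegral_ne_top (hσ : 0 ≤ σ) (α β : ℤ_[p]) : cuspIntegral ν σ α β ≠ ∞ :=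
  ne_top_of_le_ne_top ENNReal.one_ne_top <|
    lintegral_le_const (.of_forall fun _ ↦ lintegral_le_const (.of_forall fun _ ↦
      enorm_rpow_le_one hσ _))

theorem discIntegral_ne_top (hσ : 0 ≤ σ) (r₀ r₁ r₂ r₃ : ℤ_[p]) :
    discIntegral ν σ r₀ r₁ r₂ r₃ ≠ ∞ :=
  ne_top_of_le_ne_top ENNReal.one_ne_top <|
    lintegral_le_const (.of_forall fun _ ↦ lintegral_le_const (.of_forall fun _ ↦
      lintegral_le_const (.of_forall fun _ ↦ lintegral_le_const (.of_forall fun _ ↦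
        enorm_rpow_le_one hσ _))))

end Finiteness

variable [BorelSpace ℤ_[p]]

theorem cuspIntegral_swap [SFinite ν] (α β : ℤ_[p]) : cuspIntegral ν σ α β =
    ∫⁻ d, ∫⁻ c, ‖α * c ^ 3 + β * d ^ 2‖ₑ ^ σ ∂ν ∂ν :=
  lintegral_lintegral_swap (by fun_prop)

theorem discIntegral_reverse [SFinite ν] (r₀ r₁ r₂ r₃ : ℤ_[p]) :
    discIntegral ν σ r₀ r₁ r₂ r₃ = discIntegral ν σ r₃ r₂ r₁ r₀ := by
  unfold discIntegral
  rw [lintegral_reverse₄]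
  · simp only [disc3_reverse]
  · unfold disc3
    fun_prop

end Defs

variable [BorelSpace ℤ_[p]] (ν : Measure ℤ_[p]) [ν.IsAddHaarMeasure]

theorem measurableEmbedding_p_mul :
    MeasurableEmbedding (AddMonoidHom.mulLeft (p : ℤ_[p])) :=
  ((continuous_const_mul (p : ℤ_[p])).isClosedEmbedding
    (mul_right_injective₀ PadicInt.prime_p.ne_zero)).measurableEmbedding

theorem measurableSet_isUnit : MeasurableSet {x : ℤ_[p] | IsUnit x} := by
  simp only [PadicInt.isUnit_iff]
  exact (isClosed_eq continuous_norm continuous_const).measurableSet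

theorem lintegral_unit_mul_add {u : ℤ_[p]} (hu : IsUnit u) (k : ℤ_[p]) (f : ℤ_[p] → ℝ≥0∞) :
    ∫⁻ x, f (u * x + k) ∂ν = ∫⁻ x, f x ∂ν := by
  have hmul : MeasurePreserving (AddMonoidHom.mulLeft u) ν ν :=
    AddMonoidHom.measurePreserving (continuous_const_mul u)
      (IsUnit.isUnit_iff_mulLeft_bijective.1 hu).2 rfl
  have hemb : MeasurableEmbedding (AddMonoidHom.mulLeft u) :=
    ((continuous_const_mul u).isClosedEmbedding hu.mul_right_injective).measurableEmbedding
  rw [← lintegral_add_right_eq_self f k]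
  exact hmul.lintegral_comp_emb hemb fun x ↦ f (x + k)

theorem lintegral_enorm_quadratic (σ : ℝ) (α : ℤ_[p]) {β : ℤ_[p]} (hβ : IsUnit β) (γ : ℤ_[p]) :
    ∫⁻ x, ‖α + β * x + p * γ * x ^ 2‖ₑ ^ σ ∂ν = normIntegral ν σ := by
  obtain ⟨z, hz⟩ := exists_root_quadratic α hβ γ
  have hfactor (x : ℤ_[p]) : α + β * (x + z) + p * γ * (x + z) ^ 2 =
      (β + p * (γ * (x + 2 * z))) * x := by
    linear_combination hz
  rw [normIntegral, ← lintegral_add_right_eq_self _ z]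
  refine lintegral_congr fun x ↦ ?_
  rw [hfactor, enorm_mul_rpow, enorm_rpow_of_isUnit σ (isUnit_add_p_mul hβ _), one_mul]

theorem lintegral_enorm_cube_add_sq_of_isUnit (σ : ℝ) {c : ℤ_[p]} (hc : IsUnit c) :
    ∫⁻ d, ‖c ^ 3 + d ^ 2‖ₑ ^ σ ∂ν = ∫⁻ d, ‖c + d ^ 2‖ₑ ^ σ ∂ν := by
  have hmul := lintegral_unit_mul_add ν hc 0 fun d ↦ ‖c ^ 3 + d ^ 2‖ₑ ^ σ
  rw [← hmul]
  refine lintegral_congr fun d ↦ ?_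
  have hfactor : c ^ 3 + (c * d + 0) ^ 2 = c ^ 2 * (c + d ^ 2) := by ring
  rw [hfactor, enorm_mul_rpow, enorm_rpow_of_isUnit σ (hc.pow 2), one_mul]

variable [IsProbabilityMeasure ν]

theorem measure_range_p_mul :
    ν (Set.range (AddMonoidHom.mulLeft (p : ℤ_[p]))) = (p : ℝ≥0∞)⁻¹ := by
  let H : AddSubgroup ℤ_[p] := (PadicInt.toZMod (p := p)).toAddMonoidHom.ker
  have hH : (H : Set ℤ_[p]) = Set.range (AddMonoidHom.mulLeft (p : ℤ_[p])) := by
    rw [← compl_setOf_isUnit_eq_range]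
    ext x
    change x ∈ RingHom.ker PadicInt.toZMod ↔ _
    rw [PadicInt.ker_toZMod]
    rfl
  have hindex : H.index = p := by
    rw [AddSubgroup.index_ker, AddMonoidHom.range_eq_top.2 (ZMod.ringHom_surjective _)]
    simp
  have : H.FiniteIndex := ⟨by rw [hindex]; exact (Fact.out : p.Prime).ne_zero⟩
  have hmeas : MeasurableSet (H : Set ℤ_[p]) :=
    hH ▸ measurableEmbedding_p_mul.measurableSet_range
  have hmul := AddSubgroup.index_mul_measure H hmeas ν
  rw [hindex, hH, measure_univ, mul_comm] at hmul
  exact ENNReal.eq_inv_of_mul_eq_one_left hmul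

theorem measure_isUnit : ν {x | IsUnit x} = 1 - (p : ℝ≥0∞)⁻¹ := by
  rw [← measure_range_p_mul ν, ← compl_setOf_isUnit_eq_range,
    ← prob_compl_eq_one_sub measurableSet_isUnit.compl, compl_compl]

theorem lintegral_eq_units_add (f : ℤ_[p] → ℝ≥0∞) :
    ∫⁻ x, f x ∂ν = ∫⁻ x in {x | IsUnit x}, f x ∂ν + (p : ℝ≥0∞)⁻¹ * ∫⁻ x, f (p * x) ∂ν := by
  rw [← lintegral_add_compl f measurableSet_isUnit, compl_setOf_isUnit_eq_range,
    restrict_range_eq_smul_map ν ν measurableEmbedding_p_mul (measure_ne_top _ _),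
    lintegral_smul_measure, measurableEmbedding_p_mul.lintegral_map, measure_range_p_mul]
  rfl

theorem lintegral_of_eq_on_units {f : ℤ_[p] → ℝ≥0∞} {C : ℝ≥0∞} (hf : ∀ x, IsUnit x → f x = C) :
    ∫⁻ x, f x ∂ν = (1 - (p : ℝ≥0∞)⁻¹) * C + (p : ℝ≥0∞)⁻¹ * ∫⁻ x, f (p * x) ∂ν := by
  rw [lintegral_eq_units_add, setLIntegral_congr_fun measurableSet_isUnit hf, setLIntegral_const,
    measure_isUnit, mul_comm C]

variable (σ : ℝ)

theorem normIntegral_eq : normIntegral ν σ = (1 - (p : ℝ≥0∞)⁻¹) +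
    (p : ℝ≥0∞)⁻¹ * ‖(p : ℤ_[p])‖ₑ ^ σ * normIntegral ν σ := by
  conv_lhs => rw [normIntegral, lintegral_of_eq_on_units ν fun _ ↦ enorm_rpow_of_isUnit σ]
  simp only [mul_one, enorm_mul_rpow, lintegral_const_mul' _ _ (enorm_p_rpow_ne_top σ),
    normIntegral, mul_assoc]

theorem cuspIntegral_p_left (α : ℤ_[p]) {β : ℤ_[p]} (hβ : IsUnit β) :
    cuspIntegral ν σ (p * α) β =
      (1 - (p : ℝ≥0∞)⁻¹) + (p : ℝ≥0∞)⁻¹ * cuspIntegral ν σ (p * α) (p ^ 2 * β) := by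
  have hunit (d : ℤ_[p]) (hd : IsUnit d) :
      ∫⁻ c, ‖p * α * c ^ 3 + β * d ^ 2‖ₑ ^ σ ∂ν = 1 := by
    have (c : ℤ_[p]) : ‖p * α * c ^ 3 + β * d ^ 2‖ₑ ^ σ = 1 := by
      rw [add_comm, mul_assoc]
      exact enorm_rpow_of_isUnit σ (isUnit_add_p_mul (hβ.mul (hd.pow 2)) _)
    simp only [this, lintegral_one, measure_univ]
  rw [cuspIntegral_swap, lintegral_of_eq_on_units ν hunit, mul_one, cuspIntegral_swap]
  simp only [mul_pow, mul_assoc, mul_left_comm β]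

theorem cuspIntegral_p_right {α : ℤ_[p]} (hα : IsUnit α) (β : ℤ_[p]) :
    cuspIntegral ν σ α (p * β) =
      (1 - (p : ℝ≥0∞)⁻¹) + (p : ℝ≥0∞)⁻¹ * cuspIntegral ν σ (p ^ 3 * α) (p * β) := by
  have hunit (c : ℤ_[p]) (hc : IsUnit c) :
      ∫⁻ d, ‖α * c ^ 3 + p * β * d ^ 2‖ₑ ^ σ ∂ν = 1 := by
    have (d : ℤ_[p]) : ‖α * c ^ 3 + p * β * d ^ 2‖ₑ ^ σ = 1 := by
      rw [mul_assoc (p : ℤ_[p])]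
      exact enorm_rpow_of_isUnit σ (isUnit_add_p_mul (hα.mul (hc.pow 3)) _)
    simp only [this, lintegral_one, measure_univ]
  rw [cuspIntegral, lintegral_of_eq_on_units ν hunit, mul_one]
  simp only [cuspIntegral, mul_pow, mul_assoc, mul_left_comm α]

theorem cuspIntegral_cube_sq_eq : cuspIntegral ν σ (p ^ 3) (p ^ 2) =
    (1 - (p : ℝ≥0∞)⁻¹) * ((‖(p : ℤ_[p])‖ₑ ^ σ) ^ 2 + (p : ℝ≥0∞)⁻¹ * (‖(p : ℤ_[p])‖ₑ ^ σ) ^ 3 +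
        (p : ℝ≥0∞)⁻¹ ^ 2 * (‖(p : ℤ_[p])‖ₑ ^ σ) ^ 4) +
      (p : ℝ≥0∞)⁻¹ ^ 3 * (‖(p : ℤ_[p])‖ₑ ^ σ) ^ 6 * cuspIntegral ν σ 1 1 := by
  have h_sq_one := cuspIntegral_p_left ν σ p isUnit_one
  have h_one_p := cuspIntegral_p_right ν σ isUnit_one 1
  have h_p_one := cuspIntegral_p_left ν σ 1 isUnit_one
  simp only [mul_one] at h_sq_one h_one_p h_p_one
  have hscale_sq : cuspIntegral ν σ (p * p) (p ^ 2) =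
      ‖(p : ℤ_[p])‖ₑ ^ σ * (‖(p : ℤ_[p])‖ₑ ^ σ * cuspIntegral ν σ 1 1) := by
    rw [← cuspIntegral_p_mul, ← cuspIntegral_p_mul, mul_one, sq]
  have hscale_cube : cuspIntegral ν σ (p ^ 3) p =
      ‖(p : ℤ_[p])‖ₑ ^ σ * cuspIntegral ν σ (p * p) 1 := by
    rw [← cuspIntegral_p_mul, mul_one, pow_succ' _ 2, sq]
  have hscale_p_sq : cuspIntegral ν σ p (p ^ 2) =
      ‖(p : ℤ_[p])‖ₑ ^ σ * cuspIntegral ν σ 1 p := by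
    rw [← cuspIntegral_p_mul, mul_one, sq]
  have hscale_cube_sq : cuspIntegral ν σ (p ^ 3) (p ^ 2) =
      ‖(p : ℤ_[p])‖ₑ ^ σ * (‖(p : ℤ_[p])‖ₑ ^ σ * cuspIntegral ν σ p 1) := by
    rw [← cuspIntegral_p_mul, ← cuspIntegral_p_mul, mul_one, pow_succ' _ 2, sq]
  rw [hscale_cube_sq, h_p_one, hscale_p_sq, h_one_p, hscale_cube, h_sq_one, hscale_sq]
  ring

theorem lintegral_lintegral_enorm_add_sq :
    ∫⁻ c, ∫⁻ d, ‖c + d ^ 2‖ₑ ^ σ ∂ν ∂ν = normIntegral ν σ := by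
  rw [lintegral_lintegral_swap (by fun_prop)]
  simp only [lintegral_add_right_eq_self (μ := ν) fun c ↦ ‖c‖ₑ ^ σ, lintegral_const,
    measure_univ, mul_one, normIntegral]

theorem lintegral_lintegral_enorm_p_mul_add_sq : ∫⁻ c, ∫⁻ d, ‖p * c + d ^ 2‖ₑ ^ σ ∂ν ∂ν =
    (1 - (p : ℝ≥0∞)⁻¹) + (p : ℝ≥0∞)⁻¹ * (‖(p : ℤ_[p])‖ₑ ^ σ * normIntegral ν σ) := by
  have hunit (d : ℤ_[p]) (hd : IsUnit d) : ∫⁻ c, ‖p * c + d ^ 2‖ₑ ^ σ ∂ν = 1 := by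
    have (c : ℤ_[p]) : ‖p * c + d ^ 2‖ₑ ^ σ = 1 := by
      rw [add_comm]
      exact enorm_rpow_of_isUnit σ (isUnit_add_p_mul (hd.pow 2) c)
    simp only [this, lintegral_one, measure_univ]
  have hnonunit (d : ℤ_[p]) : ∫⁻ c, ‖p * c + (p * d) ^ 2‖ₑ ^ σ ∂ν =
      ‖(p : ℤ_[p])‖ₑ ^ σ * normIntegral ν σ := by
    simp only [mul_pow, sq (p : ℤ_[p]), mul_assoc, ← mul_add, enorm_mul_rpow,
      lintegral_const_mul' _ _ (enorm_p_rpow_ne_top σ), normIntegral,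
      lintegral_add_right_eq_self (μ := ν) fun c ↦ ‖c‖ₑ ^ σ]
  rw [lintegral_lintegral_swap (by fun_prop), lintegral_of_eq_on_units ν hunit, mul_one]
  simp only [hnonunit, lintegral_const, measure_univ, mul_one]

theorem cuspIntegral_add_eq_normIntegral_add :
    cuspIntegral ν σ 1 1 + (p : ℝ≥0∞)⁻¹ ^ 2 * ‖(p : ℤ_[p])‖ₑ ^ σ * normIntegral ν σ =
      normIntegral ν σ + (p : ℝ≥0∞)⁻¹ ^ 2 * cuspIntegral ν σ (p ^ 3) (p ^ 2) := by
  have hunits : ∫⁻ c in {c | IsUnit c}, ∫⁻ d, ‖c ^ 3 + d ^ 2‖ₑ ^ σ ∂ν ∂ν =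
      ∫⁻ c in {c | IsUnit c}, ∫⁻ d, ‖c + d ^ 2‖ₑ ^ σ ∂ν ∂ν :=
    setLIntegral_congr_fun measurableSet_isUnit fun c hc ↦
      lintegral_enorm_cube_add_sq_of_isUnit ν σ hc
  have hnonunits : ∫⁻ c, ∫⁻ d, ‖(p * c) ^ 3 + d ^ 2‖ₑ ^ σ ∂ν ∂ν =
      (1 - (p : ℝ≥0∞)⁻¹) + (p : ℝ≥0∞)⁻¹ * cuspIntegral ν σ (p ^ 3) (p ^ 2) := by
    have h := cuspIntegral_p_left ν σ (p ^ 2) isUnit_one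
    rw [mul_one, ← pow_succ' _ 2] at h
    simpa only [cuspIntegral, mul_pow, one_mul] using h
  have hcusp : cuspIntegral ν σ 1 1 = ∫⁻ c in {c | IsUnit c}, ∫⁻ d, ‖c + d ^ 2‖ₑ ^ σ ∂ν ∂ν +
      (p : ℝ≥0∞)⁻¹ * ((1 - (p : ℝ≥0∞)⁻¹) +
        (p : ℝ≥0∞)⁻¹ * cuspIntegral ν σ (p ^ 3) (p ^ 2)) := by
    simp only [cuspIntegral, one_mul]
    rw [lintegral_eq_units_add ν, hunits, hnonunits, cuspIntegral]
  have hsmooth := lintegral_lintegral_enorm_add_sq ν σ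
  rw [lintegral_eq_units_add, lintegral_lintegral_enorm_p_mul_add_sq] at hsmooth
  rw [hcusp]
  conv_rhs => rw [← hsmooth]
  ring

theorem lintegral_disc3_of_isUnit (hp2 : p ≠ 2) (hp3 : p ≠ 3) {α : ℤ_[p]} (hα : IsUnit α)
    (q : ℤ_[p]) : ∫⁻ x, ∫⁻ y, ∫⁻ z, ‖disc3 α (q * x) (q * y) (q * z)‖ₑ ^ σ ∂ν ∂ν ∂ν =
      cuspIntegral ν σ (q ^ 3) (q ^ 2) := by
  have h2 := isUnit_two hp2
  have h3 := isUnit_three hp3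
  have hscalar : IsUnit (-(2 ^ 4 * 3 ^ 3) * α ^ 2) :=
    ((h2.pow 4).mul (h3.pow 3)).neg.mul (hα.pow 2)
  have hy : IsUnit (2 ^ 2 * 3 * α) := ((h2.pow 2).mul h3).mul hα
  have hz : IsUnit (2 ^ 2 * 3 ^ 3 * α ^ 2) := ((h2.pow 2).mul (h3.pow 3)).mul (hα.pow 2)
  have hdisc (x y z : ℤ_[p]) : ‖disc3 α (q * x) (q * y) (q * z)‖ₑ ^ σ =
      ‖q ^ 3 * (2 ^ 2 * 3 * α * y + -4 * q * x ^ 2) ^ 3 + q ^ 2 * (2 ^ 2 * 3 ^ 3 * α ^ 2 * z +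
        (8 * q ^ 2 * x ^ 3 - 36 * α * q * x * y)) ^ 2‖ₑ ^ σ := by
    rw [← one_mul (_ ^ σ), ← enorm_rpow_of_isUnit σ hscalar, ← enorm_mul_rpow,
      disc3_completing_cube]
    congr 2
    ring
  have hx (x : ℤ_[p]) : ∫⁻ y, ∫⁻ z, ‖disc3 α (q * x) (q * y) (q * z)‖ₑ ^ σ ∂ν ∂ν =
      cuspIntegral ν σ (q ^ 3) (q ^ 2) := by
    have hz_shift (y : ℤ_[p]) := lintegral_unit_mul_add ν hz
      (8 * q ^ 2 * x ^ 3 - 36 * α * q * x * y) fun z ↦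
        ‖q ^ 3 * (2 ^ 2 * 3 * α * y + -4 * q * x ^ 2) ^ 3 + q ^ 2 * z ^ 2‖ₑ ^ σ
    simp only [hdisc, hz_shift]
    exact lintegral_unit_mul_add ν hy (-4 * q * x ^ 2) fun y ↦
      ∫⁻ z, ‖q ^ 3 * y ^ 3 + q ^ 2 * z ^ 2‖ₑ ^ σ ∂ν
  simp only [hx, lintegral_const, measure_univ, mul_one]

theorem discIntegral_one_one_one_one (hp2 : p ≠ 2) (hp3 : p ≠ 3) : discIntegral ν σ 1 1 1 1 =
    (1 - (p : ℝ≥0∞)⁻¹) * cuspIntegral ν σ 1 1 + (p : ℝ≥0∞)⁻¹ * discIntegral ν σ p 1 1 1 := by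
  have hunit (a : ℤ_[p]) (ha : IsUnit a) :
      ∫⁻ b, ∫⁻ c, ∫⁻ d, ‖disc3 a b c d‖ₑ ^ σ ∂ν ∂ν ∂ν = cuspIntegral ν σ 1 1 := by
    simpa only [one_mul, one_pow] using lintegral_disc3_of_isUnit ν σ hp2 hp3 ha 1
  simp only [discIntegral, one_mul]
  exact lintegral_of_eq_on_units ν hunit

theorem discIntegral_one_p_p_p (hp2 : p ≠ 2) (hp3 : p ≠ 3) : discIntegral ν σ 1 p p p =
    (1 - (p : ℝ≥0∞)⁻¹) * cuspIntegral ν σ (p ^ 3) (p ^ 2) +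
      (p : ℝ≥0∞)⁻¹ * discIntegral ν σ p p p p := by
  simp only [discIntegral, one_mul]
  exact lintegral_of_eq_on_units ν fun a ha ↦ lintegral_disc3_of_isUnit ν σ hp2 hp3 ha p

theorem lintegral_lintegral_of_eq_on_units {f : ℤ_[p] → ℤ_[p] → ℝ≥0∞} {C : ℝ≥0∞}
    (hf : ∀ x y, IsUnit y → f x y = C) : ∫⁻ x, ∫⁻ y, f x y ∂ν ∂ν =
      (1 - (p : ℝ≥0∞)⁻¹) * C + (p : ℝ≥0∞)⁻¹ * ∫⁻ x, ∫⁻ y, f x (p * y) ∂ν ∂ν := by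
  have hP : (p : ℝ≥0∞)⁻¹ ≠ ∞ :=
    ENNReal.inv_ne_top.2 (mod_cast (Fact.out : p.Prime).ne_zero)
  simp only [fun x ↦ lintegral_of_eq_on_units ν (hf x), lintegral_const_mul' _ _ hP,
    lintegral_add_left measurable_const, lintegral_const, measure_univ, mul_one]

theorem discIntegral_p_one_one_one (hp2 : p ≠ 2) : discIntegral ν σ p 1 1 1 =
    (1 - (p : ℝ≥0∞)⁻¹) * normIntegral ν σ + (p : ℝ≥0∞)⁻¹ * discIntegral ν σ p p 1 1 := by
  have hunit (a b : ℤ_[p]) (hb : IsUnit b) :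
      ∫⁻ c, ∫⁻ d, ‖disc3 (p * a) b c d‖ₑ ^ σ ∂ν ∂ν = normIntegral ν σ := by
    have hquadratic (c : ℤ_[p]) :
        ∫⁻ d, ‖disc3 (p * a) b c d‖ₑ ^ σ ∂ν = normIntegral ν σ := by
      rw [← lintegral_enorm_quadratic ν σ (b ^ 2 * c ^ 2 - 4 * (p * a) * c ^ 3)
        (isUnit_disc3_linear_coeff hp2 hb (18 * a * b * c)) (-27 * p * a ^ 2)]
      refine lintegral_congr fun d ↦ ?_
      congr 2
      unfold disc3
      ring
    simp only [hquadratic, lintegral_const, measure_univ, mul_one]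
  simp only [discIntegral, one_mul]
  exact lintegral_lintegral_of_eq_on_units ν hunit

theorem discIntegral_one_one_p_p (hp2 : p ≠ 2) : discIntegral ν σ 1 1 p p =
    (1 - (p : ℝ≥0∞)⁻¹) * (‖(p : ℤ_[p])‖ₑ ^ σ * normIntegral ν σ) +
      (p : ℝ≥0∞)⁻¹ * discIntegral ν σ 1 p p p := by
  have hunit (a b : ℤ_[p]) (hb : IsUnit b) : ∫⁻ c, ∫⁻ d, ‖disc3 a b (p * c) (p * d)‖ₑ ^ σ ∂ν ∂ν =
      ‖(p : ℤ_[p])‖ₑ ^ σ * normIntegral ν σ := by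
    have hquadratic (c : ℤ_[p]) : ∫⁻ d, ‖disc3 a b (p * c) (p * d)‖ₑ ^ σ ∂ν =
        ‖(p : ℤ_[p])‖ₑ ^ σ * normIntegral ν σ := by
      rw [← lintegral_enorm_quadratic ν σ (p * b ^ 2 * c ^ 2 - 4 * p ^ 2 * a * c ^ 3)
        (isUnit_disc3_linear_coeff hp2 hb (18 * a * b * c)) (-27 * a ^ 2),
        ← lintegral_const_mul' _ _ (enorm_p_rpow_ne_top σ)]
      refine lintegral_congr fun d ↦ ?_
      rw [← enorm_mul_rpow]
      congr 2
      unfold disc3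
      ring
    simp only [hquadratic, lintegral_const, measure_univ, mul_one]
  simp only [discIntegral, one_mul]
  exact lintegral_lintegral_of_eq_on_units ν hunit

theorem discIntegral_eq (hp2 : p ≠ 2) (hp3 : p ≠ 3) : discIntegral ν σ 1 1 1 1 =
    (1 - (p : ℝ≥0∞)⁻¹) * (cuspIntegral ν σ 1 1 + (p : ℝ≥0∞)⁻¹ * normIntegral ν σ +
        (p : ℝ≥0∞)⁻¹ ^ 2 * ‖(p : ℤ_[p])‖ₑ ^ σ * normIntegral ν σ +
        (p : ℝ≥0∞)⁻¹ ^ 3 * cuspIntegral ν σ (p ^ 3) (p ^ 2)) +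
      (p : ℝ≥0∞)⁻¹ ^ 4 * (‖(p : ℤ_[p])‖ₑ ^ σ) ^ 4 * discIntegral ν σ 1 1 1 1 := by
  conv_lhs =>
    rw [discIntegral_one_one_one_one ν σ hp2 hp3, discIntegral_p_one_one_one ν σ hp2,
      discIntegral_reverse, discIntegral_one_one_p_p ν σ hp2,
      discIntegral_one_p_p_p ν σ hp2 hp3, discIntegral_p]
  ring

end Haar

theorem zeta_eq_of_recursions {P U l j k z : ℝ} (hP0 : 0 < P) (hP1 : P < 1) (hU0 : 0 ≤ U)
    (hU1 : U ≤ 1) (hl : l = (1 - P) + P * U * l) (hjk : j + P ^ 2 * U * l = l + P ^ 2 * k)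
    (hk : k = (1 - P) * (U ^ 2 + P * U ^ 3 + P ^ 2 * U ^ 4) + P ^ 3 * U ^ 6 * j)
    (hz : z = (1 - P) * (j + P * l + P ^ 2 * U * l + P ^ 3 * k) + P ^ 4 * U ^ 4 * z)
    {t : ℝ} (ht : t = P * U) :
    z = (1 - P) * (1 - P ^ 2) * (1 + t + t ^ 2 + t ^ 3 + t ^ 4) /
      ((1 - t ^ 2) * (1 - P⁻¹ * t ^ 6)) := by
  have ht0 : 0 ≤ t := ht ▸ mul_nonneg hP0.le hU0
  have htP : t ≤ P := ht ▸ mul_le_of_le_one_right hP0.le hU1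
  have hden : P⁻¹ * t ^ 6 < 1 := by
    rw [inv_mul_lt_one₀ hP0]
    calc t ^ 6 ≤ P ^ 6 := pow_le_pow_left₀ ht0 htP 6
      _ < P := pow_lt_self_of_lt_one₀ hP0 hP1 (by norm_num)
  have hden_eq : P⁻¹ * t ^ 6 = P ^ 5 * U ^ 6 := by
    rw [ht]
    field_simp
  have ht2 : t ^ 2 < 1 := pow_lt_one₀ ht0 (htP.trans_lt hP1) two_ne_zero
  have hcusp : (j + P * t * l) * (1 - P⁻¹ * t ^ 6) =
      (1 - P) * (1 + t ^ 2) * (1 + t + t ^ 2 + t ^ 3 + t ^ 4) := by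
    rw [hden_eq, ht]
    linear_combination hjk + P ^ 2 * hk + (1 + P * U + (P * U) ^ 2 + (P * U) ^ 3 + (P * U) ^ 4 +
      (P * U) ^ 5 + (P * U) ^ 6) * hl
  have hdisc : z * ((1 - t ^ 2) * (1 + t ^ 2)) = (1 - P ^ 2) * (j + P * t * l) := by
    rw [ht]
    linear_combination hz - (1 - P) * P * hjk
  rw [eq_div_iff (mul_ne_zero (by linarith) (by linarith))]
  refine mul_right_cancel₀ (by positivity : 1 + t ^ 2 ≠ 0) ?_
  linear_combination (1 - P⁻¹ * t ^ 6) * hdisc + (1 - P ^ 2) * hcusp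

theorem rpow_neg_eq_inv_mul_inv_rpow {x : ℝ} (hx : 0 < x) (s : ℝ) :
    x ^ (-s) = x⁻¹ * x⁻¹ ^ (s - 1) := by
  have hinv : x⁻¹ ≠ 0 := inv_ne_zero hx.ne'
  rw [Real.rpow_sub_one hinv, mul_div_cancel₀ _ hinv, Real.inv_rpow hx.le, Real.rpow_neg hx.le]

section Transfer

variable {p : ℕ} [Fact p.Prime]

theorem toReal_discIntegral [MeasurableSpace ℤ_[p]] [BorelSpace ℤ_[p]] (ν : Measure ℤ_[p])
    [ν.IsAddHaarMeasure] [IsProbabilityMeasure ν] (hp2 : p ≠ 2) (hp3 : p ≠ 3)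
    {s : ℝ} (hs : 1 ≤ s) {t : ℝ} (ht : t = (p : ℝ) ^ (-s)) :
    (discIntegral ν (s - 1) 1 1 1 1).toReal =
      (1 - (p : ℝ)⁻¹) * (1 - ((p : ℝ) ^ 2)⁻¹) * (1 + t + t ^ 2 + t ^ 3 + t ^ 4) /
        ((1 - t ^ 2) * (1 - (p : ℝ) * t ^ 6)) := by
  have hp : (1 : ℝ) < p := mod_cast (Fact.out : p.Prime).one_lt
  have hp0 : (0 : ℝ) < p := zero_lt_one.trans hp
  have hσ : 0 ≤ s - 1 := sub_nonneg.2 hs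
  have hP_toReal : ((p : ℝ≥0∞)⁻¹).toReal = (p : ℝ)⁻¹ := by simp
  have hU_toReal := toReal_enorm_p_rpow (p := p) (s - 1)
  have hL := normIntegral_eq ν (s - 1)
  have hJK := cuspIntegral_add_eq_normIntegral_add ν (s - 1)
  have hK := cuspIntegral_cube_sq_eq ν (s - 1)
  have hZ := discIntegral_eq ν (s - 1) hp2 hp3
  have hP_ne_top : (p : ℝ≥0∞)⁻¹ ≠ ∞ := ENNReal.inv_ne_top.2 (by exact_mod_cast hp0.ne')
  lift (p : ℝ≥0∞)⁻¹ to NNReal using hP_ne_top with P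
  lift ‖(p : ℤ_[p])‖ₑ ^ (s - 1) to NNReal using enorm_p_rpow_ne_top (s - 1) with U
  lift normIntegral ν (s - 1) to NNReal using normIntegral_ne_top ν hσ with L
  lift cuspIntegral ν (s - 1) 1 1 to NNReal using cuspIntegral_ne_top ν hσ 1 1 with J
  lift cuspIntegral ν (s - 1) (p ^ 3) (p ^ 2) to NNReal using cuspIntegral_ne_top ν hσ _ _ with K
  lift discIntegral ν (s - 1) 1 1 1 1 to NNReal using discIntegral_ne_top ν hσ 1 1 1 1 with Z
  simp only [ENNReal.coe_toReal] at hP_toReal hU_toReal ⊢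
  have hP_pos : 0 < (P : ℝ) := hP_toReal ▸ inv_pos.2 hp0
  have hP_lt : (P : ℝ) < 1 := hP_toReal ▸ inv_lt_one_of_one_lt₀ hp
  have hP_le : P ≤ 1 := mod_cast hP_lt.le
  have hU_le : (U : ℝ) ≤ 1 := by
    rw [hU_toReal, ← hP_toReal]
    exact Real.rpow_le_one hP_pos.le hP_lt.le hσ
  norm_cast at hL hJK hK hZ
  rw [← NNReal.coe_inj] at hL hJK hK hZ
  push_cast [NNReal.coe_sub hP_le] at hL hJK hK hZ
  have ht_eq : t = P * U := by
    rw [ht, hP_toReal, hU_toReal, rpow_neg_eq_inv_mul_inv_rpow hp0]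
  rw [zeta_eq_of_recursions hP_pos hP_lt U.2 hU_le hL hJK hK hZ ht_eq,
    hP_toReal, inv_inv, inv_pow]

theorem measurableEmbedding_coe_pi [MeasurableSpace ℤ_[p]] [BorelSpace ℤ_[p]] (ι : Type*)
    [Finite ι] [MeasurableSpace (ι → ℚ_[p])] [BorelSpace (ι → ℚ_[p])] :
    MeasurableEmbedding
      ((PadicInt.Coe.ringHom (p := p)).toAddMonoidHom.compLeft ι : (ι → ℤ_[p]) → ι → ℚ_[p]) := by
  have hcont : Continuous fun (v : ι → ℤ_[p]) (i : ι) ↦ (v i : ℚ_[p]) := by fun_prop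
  have hinj : Function.Injective fun (v : ι → ℤ_[p]) (i : ι) ↦ (v i : ℚ_[p]) :=
    fun v w h ↦ funext fun i ↦ Subtype.ext (congrFun h i)
  exact (hcont.isClosedEmbedding hinj).measurableEmbedding

theorem range_coe_pi (ι : Type*) : Set.range
    ((PadicInt.Coe.ringHom (p := p)).toAddMonoidHom.compLeft ι : (ι → ℤ_[p]) → ι → ℚ_[p]) =
      {v | ∀ i, ‖v i‖ ≤ 1} := by
  ext v
  exact ⟨by rintro ⟨w, rfl⟩ i; exact (w i).2, fun hv ↦ ⟨fun i ↦ ⟨v i, hv i⟩, rfl⟩⟩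

theorem restrict_integers_eq_map [MeasurableSpace ℤ_[p]] [BorelSpace ℤ_[p]]
    (ν : Measure ℤ_[p]) [ν.IsAddHaarMeasure] [IsProbabilityMeasure ν] {ι : Type*} [Fintype ι]
    [MeasurableSpace (ι → ℚ_[p])] [BorelSpace (ι → ℚ_[p])] (μ : Measure (ι → ℚ_[p]))
    [μ.IsAddLeftInvariant] (hμ : μ {v | ∀ i, ‖v i‖ ≤ 1} = 1) :
    μ.restrict {v | ∀ i, ‖v i‖ ≤ 1} =
      (Measure.pi fun _ ↦ ν).map ((PadicInt.Coe.ringHom (p := p)).toAddMonoidHom.compLeft ι) := by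
  have hmap := restrict_range_eq_smul_map (Measure.pi fun _ : ι ↦ ν) μ
    (measurableEmbedding_coe_pi ι) (by rw [range_coe_pi, hμ]; exact ENNReal.one_ne_top)
  rwa [range_coe_pi, hμ, one_smul] at hmap

theorem setIntegral_norm_disc3_rpow [MeasurableSpace ℤ_[p]] [BorelSpace ℤ_[p]]
    (ν : Measure ℤ_[p]) [ν.IsAddHaarMeasure] [IsProbabilityMeasure ν]
    [MeasurableSpace (Fin 4 → ℚ_[p])] [BorelSpace (Fin 4 → ℚ_[p])]
    (μ : Measure (Fin 4 → ℚ_[p])) [μ.IsAddLeftInvariant] (hμ : μ {v | ∀ i, ‖v i‖ ≤ 1} = 1)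
    {σ : ℝ} (hσ : 0 ≤ σ) :
    ∫ v in {v : Fin 4 → ℚ_[p] | ∀ i, ‖v i‖ ≤ 1}, ‖disc3 (v 0) (v 1) (v 2) (v 3)‖ ^ σ ∂μ =
      (discIntegral ν σ 1 1 1 1).toReal := by
  have hmeas : Measurable fun v : Fin 4 → ℤ_[p] ↦ ‖disc3 (v 0) (v 1) (v 2) (v 3)‖ₑ ^ σ := by
    unfold disc3
    fun_prop
  have hnorm (v : Fin 4 → ℤ_[p]) : ‖disc3 (v 0 : ℚ_[p]) (v 1) (v 2) (v 3)‖ ^ σ =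
      (‖disc3 (v 0) (v 1) (v 2) (v 3)‖ₑ ^ σ).toReal := by
    rw [← ENNReal.toReal_rpow, toReal_enorm, PadicInt.norm_def]
    exact congrArg (‖·‖ ^ σ) (map_disc3 PadicInt.Coe.ringHom (v 0) (v 1) (v 2) (v 3)).symm
  rw [restrict_integers_eq_map ν μ hμ, (measurableEmbedding_coe_pi (Fin 4)).integral_map]
  refine (integral_congr_ae (.of_forall hnorm)).trans ?_
  rw [integral_toReal hmeas.aemeasurable (.of_forall fun _ ↦
    (enorm_rpow_le_one hσ _).trans_lt ENNReal.one_lt_top), lintegral_pi_fin_four ν hmeas]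
  simp only [discIntegral, one_mul]
  rfl

end Transfer

end IgusaCubic

/-- **Igusa's zeta function for binary cubic forms.**  Let `p ∉ {2,3}` be a prime, `s ≥ 1`
real, `t = p^{−s}`, and let `μ` be an additive Haar (translation-invariant Borel) measure
on `ℚ_p⁴` normalized so that `μ(ℤ_p⁴) = 1`.  Then
`∫_{ℤ_p⁴} |Δ₃(v)|^{s−1} dμ(v) = (1 − p⁻¹)(1 − p⁻²)·(1 + t + t² + t³ + t⁴)/((1 − t²)(1 − p·t⁶))`. -/
theorem igusa_zeta_binary_cubic (p : ℕ) [Fact p.Prime] (hp2 : p ≠ 2) (hp3 : p ≠ 3)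
    (s : ℝ) (hs : 1 ≤ s) (t : ℝ) (ht : t = (p : ℝ) ^ (-s))
    [MeasurableSpace (Fin 4 → ℚ_[p])] [BorelSpace (Fin 4 → ℚ_[p])]
    (μ : Measure (Fin 4 → ℚ_[p])) [μ.IsAddLeftInvariant]
    (hμ : μ {v | ∀ i, ‖v i‖ ≤ 1} = 1) :
    ∫ v in {v : Fin 4 → ℚ_[p] | ∀ i, ‖v i‖ ≤ 1},
        ‖disc3 (v 0) (v 1) (v 2) (v 3)‖ ^ (s - 1) ∂μ =
      (1 - (p : ℝ)⁻¹) * (1 - ((p : ℝ) ^ 2)⁻¹) * (1 + t + t ^ 2 + t ^ 3 + t ^ 4) /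
        ((1 - t ^ 2) * (1 - (p : ℝ) * t ^ 6)) := by
  let _ : MeasurableSpace ℤ_[p] := borel _
  have : BorelSpace ℤ_[p] := ⟨rfl⟩
  let ν : Measure ℤ_[p] := Measure.addHaarMeasure ⊤
  have : IsProbabilityMeasure ν := ⟨Measure.addHaarMeasure_self⟩
  rw [IgusaCubic.setIntegral_norm_disc3_rpow ν μ hμ (sub_nonneg.2 hs)]
  exact IgusaCubic.toReal_discIntegral ν hp2 hp3 hs ht
end

section
/- Let k be a field with char k ∉ {2,3}, and let k⟦t⟧ be the ring of formal power series over k. Let (A,B) be a pair of symmetric 3×3 matrices over k⟦t⟧ with Δ₄(A,B) ≠ 0, and let M be the image of the k⟦t⟧-linear map 𝔤₄(k⟦t⟧) → Sym₃(k⟦t⟧)² sending (X₃,X₂) to (X₃,X₂)·(A,B), where Sym₃ denotes symmetric 3×3 matrices. Then the quotient Sym₃(k⟦t⟧)² / M is a finite-dimensional k-vector space of dimension equal to the t-adic order of Δ₄(A,B). -/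
/-- The binary cubic form `4·det(x·A − y·B)` associated to a pair of 3×3 matrices,
as an element of `R[x][y]` (the inner variable is `x`, the outer variable is `y`). -/
noncomputable def pairCubic {R : Type*} [CommRing R] (A B : Matrix (Fin 3) (Fin 3) R) :
    Polynomial (Polynomial R) :=
  4 * Matrix.det (Matrix.of fun i j =>
    (Polynomial.C (Polynomial.C (A i j) * Polynomial.X) -
      Polynomial.X * Polynomial.C (Polynomial.C (B i j)) : Polynomial (Polynomial R)))

/-- The discriminant `Δ₄(A,B)` of a pair of 3×3 matrices: writing
`4·det(x·A − y·B) = a·x³ + b·x²y + c·xy² + d·y³`, it is `Δ₃(a,b,c,d)`. -/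
noncomputable def disc4 {R : Type*} [CommRing R] (A B : Matrix (Fin 3) (Fin 3) R) : R :=
  disc3 (((pairCubic A B).coeff 0).coeff 3) (((pairCubic A B).coeff 1).coeff 2)
    (((pairCubic A B).coeff 2).coeff 1) (((pairCubic A B).coeff 3).coeff 0)

/-- The Lie algebra action of `𝔤₄(R) = {(X₃,X₂) : tr X₃ = tr X₂}` on pairs of symmetric
3×3 matrices: `(X₃,X₂)·(A,B) = (X₃A + AX₃ᵀ − x₁₁A − x₂₁B, X₃B + BX₃ᵀ − x₁₂A − x₂₂B)`. -/
def lieAct4 {R : Type*} [CommRing R] (X3 : Matrix (Fin 3) (Fin 3) R)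
    (X2 : Matrix (Fin 2) (Fin 2) R) (A B : Matrix (Fin 3) (Fin 3) R) :
    Matrix (Fin 3) (Fin 3) R × Matrix (Fin 3) (Fin 3) R :=
  (X3 * A + A * X3.transpose - X2 0 0 • A - X2 1 0 • B,
   X3 * B + B * X3.transpose - X2 0 1 • A - X2 1 1 • B)

/-- Index set for the entries of a symmetric 3×3 matrix: pairs `(i,j)` with `i ≤ j`.
Functions `SymIdx → R` form a free `R`-module of rank 6, a model of the module `Sym₃(R)` of
symmetric 3×3 matrices over `R`. -/
abbrev SymIdx : Type := {ij : Fin 3 × Fin 3 // ij.1 ≤ ij.2}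

/-- The coordinates of (the upper triangle of) a 3×3 matrix. -/
def symOf {R : Type*} (A : Matrix (Fin 3) (Fin 3) R) : SymIdx → R :=
  fun ij => A ij.1.1 ij.1.2

/-!
In coordinates the action map is an endomorphism of a free module of rank 12, and over a principal
ideal domain the cokernel of an injective endomorphism has length equal to the order of its
determinant. So it suffices to show that this determinant `lieDet4 A B` equals `Δ₄(A,B)` up to a
unit, namely `64 * lieDet4 A B = disc4 A B`.

Under `(A, B) ↦ (g A gᵀ, g B gᵀ)` both sides are multiplied by `det g ^ 8`, because the determinant
of a congruence action on symmetric matrices is a character of `g`, hence determined by its values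
on diagonal matrices. Over an algebraically closed field this reduces an invertible `A` to `A = 1`,
where a Schur complement reduces the identity to a `6 × 6` determinant. The general case follows by
specializing the generic pair `(A + X • 1, B)` at `X = 0`.
-/

section Cokernel

variable {R : Type*} [CommRing R]

theorem ord_prod {ι : Type*} (s : Finset ι) {a : ι → R}
    (ha : ∀ i ∈ s, a i ∈ nonZeroDivisors R) :
    Ring.ord R (∏ i ∈ s, a i) = ∑ i ∈ s, Ring.ord R (a i) := by
  classical
  induction s using Finset.induction_on with
  | empty => simp
  | insert i s hi ih =>
    rw [Finset.prod_insert hi, Finset.sum_insert hi,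
      Ring.ord_mul' R (ha i (s.mem_insert_self i)),
      ih fun j hj => ha j (Finset.mem_insert_of_mem hj)]

theorem length_quotient_range_eq_ord_det [IsDomain R] [IsPrincipalIdealRing R] {V : Type*}
    [AddCommGroup V] [Module R V] [Module.Free R V] [Module.Finite R V] (f : V →ₗ[R] V)
    (hf : LinearMap.det f ≠ 0) :
    Module.length R (V ⧸ LinearMap.range f) = Ring.ord R (LinearMap.det f) := by
  have hinj : Function.Injective f := by
    rw [← LinearMap.ker_eq_bot]
    by_contra hker
    exact hf (LinearMap.det_eq_zero_iff_ker_ne_bot.mpr hker)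
  let b := Module.Free.chooseBasis R V
  let e := LinearEquiv.ofInjective f hinj
  have hrank : Module.finrank R (LinearMap.range f) = Module.finrank R V := e.symm.finrank_eq
  let a := Submodule.smithNormalFormCoeffs b hrank
  let top := Submodule.smithNormalFormTopBasis b hrank
  let bot := Submodule.smithNormalFormBotBasis b hrank
  have ha (i) : a i ∈ nonZeroDivisors R :=
    mem_nonZeroDivisors_of_ne_zero (Submodule.smithNormalFormCoeffs_ne_zero b hrank i)
  let g := (top.equiv bot (Equiv.refl _)).trans e.symm
  have hg : Matrix.toLin top top (Matrix.diagonal a) = f ∘ₗ (g : V →ₗ[R] V) := by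
    refine top.ext fun i => ?_
    have hfe (y) : f (e.symm y) = y := congrArg Subtype.val (e.apply_symm_apply y)
    simp [g, hfe, Matrix.toLin_self, Matrix.diagonal_apply, top, bot, a,
      Submodule.smithNormalFormBotBasis_def]
  have hdet : Associated (∏ i, a i) (LinearMap.det f) := by
    rw [← Matrix.det_diagonal, ← LinearMap.det_toLin top]
    exact LinearMap.associated_det_of_eq_comp g _ _ (LinearMap.congr_fun hg)
  calc Module.length R (V ⧸ LinearMap.range f)
    _ = ∑ i, Ring.ord R (a i) := by
      rw [(Submodule.quotientEquivPiSpan _ b hrank).length_eq, Module.length_pi_of_fintype]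
      rfl
    _ = Ring.ord R (LinearMap.det f) := by
      rw [← ord_prod _ fun i _ => ha i, Ring.ord_eq_of_associated hdet]

end Cokernel

section PowerSeries

open IsLocalRing

variable {k : Type*} [Field k]

theorem ord_powerSeries_eq_order {f : PowerSeries k} (hf : f ≠ 0) :
    Ring.ord (PowerSeries k) f = f.order := by
  have hX := PowerSeries.X_irreducible (R := k)
  calc Ring.ord (PowerSeries k) f
    _ = Ring.ord (PowerSeries k) (PowerSeries.X ^ f.order.toNat * f.divXPowOrder) := by
      rw [PowerSeries.X_pow_order_mul_divXPowOrder]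
    _ = f.order.toNat := by
      rw [Ring.ord_mul_of_isUnit_right (PowerSeries.isUnit_divided_by_X_pow_order hf),
        Ring.ord_pow (mem_nonZeroDivisors_of_ne_zero hX.ne_zero), Ring.ord_of_irreducible hX,
        nsmul_one]
    _ = f.order := PowerSeries.coe_toNat_order hf

variable (k) in
theorem algebraMap_residueField_powerSeries_surjective :
    Function.Surjective (algebraMap (ResidueField k) (ResidueField (PowerSeries k))) := by
  intro r
  obtain ⟨f, rfl⟩ := residue_surjective r
  refine ⟨residue k (PowerSeries.constantCoeff f), ?_⟩
  change residue _ (PowerSeries.C (PowerSeries.constantCoeff f)) = _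
  rw [← sub_eq_zero, ← map_sub, residue_eq_zero_iff, ← PowerSeries.ker_coeff_eq_max_ideal]
  simp

variable {N : Type*} [AddCommGroup N] [Module (PowerSeries k) N] [Module k N]
  [IsScalarTower k (PowerSeries k) N]

theorem length_eq_length_powerSeries : Module.length k N = Module.length (PowerSeries k) N := by
  have h : Module.length (ResidueField k) (ResidueField (PowerSeries k)) = 1 := by
    rw [Module.length_eq_one_iff, isSimpleModule_iff_isSimpleModule_of_algebraMap_surjective
      (algebraMap_residueField_powerSeries_surjective k)]
    infer_instance
  rw [length_restrictScalars k (PowerSeries k) N, h, mul_one]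

theorem finiteDimensional_and_finrank_eq_order {f : PowerSeries k} (hf : f ≠ 0)
    (h : Module.length (PowerSeries k) N = Ring.ord (PowerSeries k) f) :
    FiniteDimensional k N ∧ (Module.finrank k N : ℕ∞) = f.order := by
  have hlength : Module.length k N = f.order := by
    rw [length_eq_length_powerSeries, h, ord_powerSeries_eq_order hf]
  have hfinite : IsFiniteLength k N := by
    rwa [← Module.length_ne_top_iff, hlength, ne_eq, PowerSeries.order_eq_top]
  have : IsNoetherian k N := (isFiniteLength_iff_isNoetherian_isArtinian.mp hfinite).1
  exact ⟨inferInstance, (Module.length_eq_finrank k N).symm.trans hlength⟩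

end PowerSeries

section Coordinates

open scoped Matrix

/-- The enumeration of the coordinates of a symmetric 3×3 matrix with the diagonal entries first. -/
noncomputable def symIdxEquiv : Fin 6 ≃ SymIdx :=
  Equiv.ofBijective
    ![⟨(0, 0), by decide⟩, ⟨(1, 1), by decide⟩, ⟨(2, 2), by decide⟩,
      ⟨(0, 1), by decide⟩, ⟨(0, 2), by decide⟩, ⟨(1, 2), by decide⟩]
    (by decide)

variable {R : Type*} [CommRing R]

/-- The symmetric matrix with given coordinates, inverse to `symOf` on symmetric matrices. -/
def symMat : (SymIdx → R) →ₗ[R] Matrix (Fin 3) (Fin 3) R where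
  toFun v := Matrix.of fun i j => v ⟨(min i j, max i j), min_le_max⟩
  map_add' _ _ := rfl
  map_smul' _ _ := rfl

theorem symMat_apply (v : SymIdx → R) (i j : Fin 3) :
    symMat v i j = v ⟨(min i j, max i j), min_le_max⟩ :=
  rfl

theorem symMat_apply_of_le (v : SymIdx → R) {i j : Fin 3} (h : i ≤ j) :
    symMat v i j = v ⟨(i, j), h⟩ := by
  simp only [symMat_apply, min_eq_left h, max_eq_right h]

theorem symOf_symMat (v : SymIdx → R) : symOf (symMat v) = v :=
  funext fun ij => symMat_apply_of_le v ij.2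

theorem isSymm_symMat (v : SymIdx → R) : (symMat v).IsSymm :=
  Matrix.IsSymm.ext fun i j => by simp only [symMat_apply, min_comm, max_comm]

theorem symMat_symOf {A : Matrix (Fin 3) (Fin 3) R} (hA : A.IsSymm) : symMat (symOf A) = A := by
  ext i j
  rcases le_total i j with h | h
  · exact symMat_apply_of_le _ h
  · rw [← (isSymm_symMat _).apply i j, ← hA.apply i j]
    exact symMat_apply_of_le _ h

theorem isSymm_mul_mul_transpose {n : Type*} [Fintype n] (g : Matrix n n R) {A : Matrix n n R}
    (hA : A.IsSymm) : (g * A * gᵀ).IsSymm := by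
  rw [Matrix.IsSymm, Matrix.transpose_mul, Matrix.transpose_mul, Matrix.transpose_transpose, hA,
    Matrix.mul_assoc]

/-- The congruence action `S ↦ g S gᵀ` on symmetric matrices, in coordinates. -/
def congrLinear (g : Matrix (Fin 3) (Fin 3) R) : Module.End R (SymIdx → R) where
  toFun v := symOf (g * symMat v * gᵀ)
  map_add' v w := by rw [map_add, mul_add, add_mul]; rfl
  map_smul' c v := by rw [map_smul, Matrix.mul_smul, Matrix.smul_mul]; rfl

theorem congrLinear_apply (g : Matrix (Fin 3) (Fin 3) R) (v : SymIdx → R) :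
    congrLinear g v = symOf (g * symMat v * gᵀ) :=
  rfl

theorem congrLinear_symOf (g : Matrix (Fin 3) (Fin 3) R) {A : Matrix (Fin 3) (Fin 3) R}
    (hA : A.IsSymm) : congrLinear g (symOf A) = symOf (g * A * gᵀ) := by
  rw [congrLinear_apply, symMat_symOf hA]

/-- `congrLinear` as a representation of the monoid of 3×3 matrices. -/
def congrHom : Matrix (Fin 3) (Fin 3) R →* Module.End R (SymIdx → R) where
  toFun := congrLinear
  map_one' := LinearMap.ext fun v => by simp [congrLinear_apply, symOf_symMat]
  map_mul' g h := LinearMap.ext fun v => by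
    rw [Module.End.mul_apply, congrLinear_apply h,
      congrLinear_symOf g (isSymm_mul_mul_transpose h (isSymm_symMat v)), congrLinear_apply]
    simp only [Matrix.transpose_mul, Matrix.mul_assoc]

theorem det_congrHom_diagonal (d : Fin 3 → R) :
    LinearMap.det (congrHom (Matrix.diagonal d)) = (∏ i, d i) ^ 4 := by
  have h : congrHom (Matrix.diagonal d) =
      Matrix.toLin' (Matrix.diagonal fun ij : SymIdx => d ij.1.1 * d ij.1.2) := by
    refine LinearMap.ext fun v => funext fun ij => ?_
    rw [Matrix.toLin'_apply, Matrix.mulVec_diagonal, ← symMat_apply_of_le v ij.2]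
    change (Matrix.diagonal d * symMat v * (Matrix.diagonal d)ᵀ) _ _ = _
    rw [Matrix.diagonal_transpose, Matrix.mul_diagonal, Matrix.diagonal_mul]
    ring
  rw [h, LinearMap.det_toLin', Matrix.det_diagonal, ← symIdxEquiv.prod_comp, Fin.prod_univ_six,
    Fin.prod_univ_three]
  simp only [symIdxEquiv, Equiv.ofBijective_apply, Matrix.cons_val]
  ring

end Coordinates

section Character

open Matrix

variable {n K : Type*} [Fintype n] [DecidableEq n] [Field K]

theorem map_transvection_eq_one (h2 : (2 : K) ≠ 0) (χ : Matrix n n K →* K)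
    (hχ : ∀ d, (∀ i, d i ≠ 0) → χ (diagonal d) ≠ 0) {i j : n} (hij : i ≠ j) (c : K) :
    χ (transvection i j c) = 1 := by
  let D : n → K := Pi.mulSingle i 2
  have hD : χ (diagonal D) ≠ 0 := by
    refine hχ D fun l => ?_
    by_cases h : l = i
    · subst h
      simpa [D] using h2
    · simp [D, h]
  -- Conjugation by `D` squares the transvection but fixes its image in the commutative `K`.
  have hconj : diagonal D * transvection i j c =
      transvection i j c * transvection i j c * diagonal D := by
    rw [transvection_mul_transvection_same _ _ hij]
    ext a b
    simp only [transvection, diagonal_mul, mul_diagonal, Matrix.add_apply, Matrix.one_apply,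
      Matrix.single_apply, D, Pi.mulSingle_apply]
    grind
  have hsq : χ (transvection i j c) = χ (transvection i j c) * χ (transvection i j c) := by
    refine mul_right_cancel₀ hD ?_
    rw [← map_mul, ← map_mul, ← map_mul, ← hconj, map_mul, map_mul, mul_comm]
  have hunit : χ (transvection i j (-c)) * χ (transvection i j c) = 1 := by
    rw [← map_mul, transvection_mul_transvection_same _ _ hij, neg_add_cancel, transvection_zero,
      map_one]
  exact (mul_eq_left₀ (right_ne_zero_of_mul_eq_one hunit)).mp hsq.symm

theorem map_eq_det_pow_of_map_diagonal (h2 : (2 : K) ≠ 0) (χ : Matrix n n K →* K) (m : ℕ)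
    (hχ : ∀ d, χ (diagonal d) = (∏ i, d i) ^ m) {g : Matrix n n K} (hg : g.det ≠ 0) :
    χ g = g.det ^ m := by
  refine diagonal_transvection_induction_of_det_ne_zero (fun g => χ g = g.det ^ m) g hg ?_ ?_ ?_
  · intro d _
    rw [hχ, det_diagonal]
  · intro t
    rw [TransvectionStruct.det, one_pow]
    refine map_transvection_eq_one h2 χ (fun d hd => ?_) t.hij t.c
    rw [hχ]
    exact pow_ne_zero m (Finset.prod_ne_zero_iff.mpr fun i _ => hd i)
  · intro g h _ _ hg hh
    rw [map_mul, hg, hh, det_mul, mul_pow]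

end Character

section ActionMap

variable {R : Type*} [CommRing R]

/-- Pairs of symmetric 3×3 matrices, in coordinates. -/
abbrev SymPair (R : Type*) : Type _ := (SymIdx → R) × (SymIdx → R)

/-- Coordinates on `𝔤₄(R)`, realized as the pairs of `X₃` and the vector `(x₁₁, x₂₁, x₁₂)`, the
entry `x₂₂` being determined by the trace condition. The first component of `SymPair R` holds the
upper triangle of `X₃`, the second one its entries below the diagonal together with the vector. -/
def lieAlg4Equiv : SymPair R ≃ₗ[R] Matrix (Fin 3) (Fin 3) R × (Fin 3 → R) where
  toFun p :=
    (Matrix.of fun i j => if h : i ≤ j then p.1 ⟨(i, j), h⟩ else p.2 ⟨(j, i), le_of_not_ge h⟩,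
      fun i => p.2 ⟨(i, i), le_rfl⟩)
  invFun X :=
    (symOf X.1, fun ij => if ij.1.1 = ij.1.2 then X.2 ij.1.1 else X.1 ij.1.2 ij.1.1)
  map_add' p q := by
    refine Prod.ext ?_ rfl
    ext i j
    by_cases h : i ≤ j <;> simp [h]
  map_smul' c p := by
    refine Prod.ext ?_ rfl
    ext i j
    by_cases h : i ≤ j <;> simp [h]
  left_inv p := by
    refine Prod.ext (funext fun ⟨⟨i, j⟩, h⟩ => ?_) (funext fun ⟨⟨i, j⟩, h⟩ => ?_)
    · exact dif_pos h
    · rcases (show i ≤ j from h).eq_or_lt with rfl | hlt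
      · simp
      · simp [hlt.ne, hlt.not_ge]
  right_inv X := by
    refine Prod.ext ?_ (funext fun i => ?_)
    · ext i j
      by_cases h : i ≤ j
      · simp [h, symOf]
      · simp [h, (not_le.mp h).ne]
    · simp

/-- The action map `X ↦ X·(A,B)` on `𝔤₄(R)`, in the coordinates `(X₃, (x₁₁, x₂₁, x₁₂))` of the
source and `symOf` of the target. -/
def lieMap4 (A B : Matrix (Fin 3) (Fin 3) R) :
    Matrix (Fin 3) (Fin 3) R × (Fin 3 → R) →ₗ[R] SymPair R where
  toFun X :=
    let Y := lieAct4 X.1 !![X.2 0, X.2 2; X.2 1, X.1.trace - X.2 0] A B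
    (symOf Y.1, symOf Y.2)
  map_add' X Y := by
    ext ij <;> simp [symOf, lieAct4, add_mul, mul_add] <;> ring
  map_smul' c X := by
    ext ij <;> simp [symOf, lieAct4] <;> ring

/-- The determinant of the action map `𝔤₄(R) → Sym₃(R)²` at `(A,B)`, with respect to the
coordinates of `lieAlg4Equiv` and `symOf`. -/
noncomputable def lieDet4 (A B : Matrix (Fin 3) (Fin 3) R) : R :=
  LinearMap.det (lieMap4 A B ∘ₗ lieAlg4Equiv.toLinearMap)

theorem range_lieMap4 (A B : Matrix (Fin 3) (Fin 3) R) :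
    (LinearMap.range (lieMap4 A B) : Set (SymPair R)) =
      Set.range (fun X : {Y : Matrix (Fin 3) (Fin 3) R × Matrix (Fin 2) (Fin 2) R //
          Y.1.trace = Y.2.trace} =>
        (symOf (lieAct4 X.1.1 X.1.2 A B).1, symOf (lieAct4 X.1.1 X.1.2 A B).2)) := by
  ext p
  constructor
  · rintro ⟨X, rfl⟩
    exact ⟨⟨(X.1, !![X.2 0, X.2 2; X.2 1, X.1.trace - X.2 0]), by simp [Matrix.trace_fin_two]⟩,
      rfl⟩
  · rintro ⟨⟨⟨X₃, X₂⟩, hX⟩, rfl⟩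
    refine ⟨(X₃, ![X₂ 0 0, X₂ 1 0, X₂ 0 1]), ?_⟩
    have hX₂ : !![X₂ 0 0, X₂ 0 1; X₂ 1 0, X₃.trace - X₂ 0 0] = X₂ := by
      rw [hX, Matrix.trace_fin_two, add_sub_cancel_left]
      exact (Matrix.eta_fin_two X₂).symm
    change (symOf (lieAct4 X₃ !![X₂ 0 0, X₂ 0 1; X₂ 1 0, X₃.trace - X₂ 0 0] A B).1,
      symOf (lieAct4 X₃ !![X₂ 0 0, X₂ 0 1; X₂ 1 0, X₃.trace - X₂ 0 0] A B).2) = _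
    rw [hX₂]

end ActionMap

section BaseChange

theorem map_det_of_comp_eq {ι R S V W : Type*} [Finite ι] [CommRing R] [CommRing S]
    [AddCommGroup V] [Module R V] [AddCommGroup W] [Module S W] {σ : R →+* S}
    (b : Module.Basis ι R V) (c : Module.Basis ι S W) (T : V →ₛₗ[σ] W)
    (hT : ∀ i, T (b i) = c i) {f : V →ₗ[R] V} {g : W →ₗ[S] W} (h : ∀ v, T (f v) = g (T v)) :
    σ (LinearMap.det f) = LinearMap.det g := by
  classical
  cases nonempty_fintype ι
  have hrepr (v : V) (i : ι) : c.repr (T v) i = σ (b.repr v i) := by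
    conv_lhs => rw [← b.sum_repr v, map_sum]
    simp_rw [map_smulₛₗ, hT, c.repr_sum_self]
  rw [← LinearMap.det_toMatrix b, ← LinearMap.det_toMatrix c, RingHom.map_det]
  congr 1
  ext i j
  simp only [RingHom.mapMatrix_apply, Matrix.map_apply, LinearMap.toMatrix_apply]
  rw [← hrepr, h, hT]

variable {R S : Type*} [CommRing R] [CommRing S]

/-- Base change of pairs of symmetric matrices along a ring homomorphism, in coordinates. -/
def symPairMap (σ : R →+* S) : SymPair R →ₛₗ[σ] SymPair S where
  toFun p := (σ ∘ p.1, σ ∘ p.2)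
  map_add' _ _ := by ext <;> simp
  map_smul' _ _ := by ext <;> simp

theorem map_lieDet4 (σ : R →+* S) (A B : Matrix (Fin 3) (Fin 3) R) :
    σ (lieDet4 A B) = lieDet4 (A.map σ) (B.map σ) := by
  refine map_det_of_comp_eq ((Pi.basisFun R SymIdx).prod (Pi.basisFun R SymIdx))
    ((Pi.basisFun S SymIdx).prod (Pi.basisFun S SymIdx)) (symPairMap σ) ?_ fun p => ?_
  · rintro (i | i) <;> ext j <;> simp [symPairMap, Pi.single_apply, apply_ite σ]
  · have hmat : (lieAlg4Equiv (symPairMap σ p)).1 = (lieAlg4Equiv p).1.map σ := by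
      ext i j
      by_cases h : i ≤ j <;> simp [lieAlg4Equiv, symPairMap, h]
    have hvec (i : Fin 3) : (lieAlg4Equiv (symPairMap σ p)).2 i = σ ((lieAlg4Equiv p).2 i) := rfl
    simp only [LinearMap.comp_apply, LinearEquiv.coe_coe, lieMap4, LinearMap.coe_mk,
      AddHom.coe_mk, hmat, hvec]
    ext <;> simp [symPairMap, symOf, lieAct4, Matrix.mul_apply, Matrix.trace]

theorem map_disc4 (σ : R →+* S) (A B : Matrix (Fin 3) (Fin 3) R) :
    σ (disc4 A B) = disc4 (A.map σ) (B.map σ) := by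
  have hcubic : (pairCubic A B).map (Polynomial.mapRingHom σ) =
      pairCubic (A.map σ) (B.map σ) := by
    rw [pairCubic, ← Polynomial.coe_mapRingHom, map_mul, map_ofNat, RingHom.map_det]
    congr 2
    ext1 i j
    simp
  have hcoeff (i j : ℕ) : ((pairCubic (A.map σ) (B.map σ)).coeff i).coeff j =
      σ (((pairCubic A B).coeff i).coeff j) := by
    rw [← hcubic, Polynomial.coeff_map, Polynomial.coe_mapRingHom, Polynomial.coeff_map]
  simp only [disc4, hcoeff, disc3, map_add, map_sub, map_mul, map_pow, map_ofNat]

end BaseChange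

section Equivariance

open scoped Matrix

variable {R : Type*} [CommRing R]

/-- The map `X₃ ↦ g X₃ h` on `𝔤₄(R)`, fixing `X₂`; for `h = g⁻¹` it is the adjoint action of `g`. -/
def lieAlg4Conj (g h : Matrix (Fin 3) (Fin 3) R) :
    Matrix (Fin 3) (Fin 3) R × (Fin 3 → R) →ₗ[R] Matrix (Fin 3) (Fin 3) R × (Fin 3 → R) :=
  (LinearMap.mulLeft R g ∘ₗ LinearMap.mulRight R h).prodMap LinearMap.id

open scoped Kronecker in
theorem det_mulLeft_comp_mulRight {n : Type*} [Fintype n] [DecidableEq n] (g h : Matrix n n R) :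
    LinearMap.det (LinearMap.mulLeft R g ∘ₗ LinearMap.mulRight R h) =
      g.det ^ Fintype.card n * h.det ^ Fintype.card n := by
  have hkronecker : LinearMap.toMatrix (Matrix.stdBasis R n n) (Matrix.stdBasis R n n)
      (LinearMap.mulLeft R g ∘ₗ LinearMap.mulRight R h) = g ⊗ₖ hᵀ := by
    ext ⟨i, j⟩ ⟨k, l⟩
    rw [LinearMap.toMatrix_apply, Matrix.stdBasis_eq_single]
    change (g * (Matrix.single k l (1 : R) * h) : Matrix n n R) i j = g i k * h l j
    simp [Matrix.mul_apply, Matrix.single_apply, ite_and]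
  rw [← LinearMap.det_toMatrix (Matrix.stdBasis R n n), hkronecker, Matrix.det_kronecker,
    Matrix.det_transpose]

theorem det_lieAlg4Conj {g h : Matrix (Fin 3) (Fin 3) R} (hgh : h * g = 1) :
    LinearMap.det (lieAlg4Conj g h) = 1 := by
  rw [lieAlg4Conj, LinearMap.det_prodMap, det_mulLeft_comp_mulRight, LinearMap.det_id, mul_one,
    mul_comm, ← mul_pow, ← Matrix.det_mul, hgh, Matrix.det_one, one_pow]

open Polynomial in
theorem pairCubic_eq (A B : Matrix (Fin 3) (Fin 3) R) :
    pairCubic A B =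
      4 * ((C X : R[X][X]) • A.map (C.comp C) - (X : R[X][X]) • B.map (C.comp C)).det := by
  rw [pairCubic]
  congr 2
  ext1 i j
  simp only [Matrix.of_apply, Matrix.sub_apply, Matrix.smul_apply, Matrix.map_apply, smul_eq_mul,
    RingHom.comp_apply, C_mul, mul_comm]

open Polynomial in
theorem pairCubic_congr (g A B : Matrix (Fin 3) (Fin 3) R) :
    pairCubic (g * A * gᵀ) (g * B * gᵀ) = C (C (g.det ^ 2)) * pairCubic A B := by
  let ι : R →+* R[X][X] := C.comp C
  have hg : (g.map ι).det = C (C g.det) := (ι.map_det g).symm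
  have hcongr :
      (C X : R[X][X]) • (g * A * gᵀ).map ι - (X : R[X][X]) • (g * B * gᵀ).map ι =
        g.map ι * ((C X : R[X][X]) • A.map ι - (X : R[X][X]) • B.map ι) * (g.map ι)ᵀ := by
    simp only [Matrix.map_mul, mul_sub, sub_mul, Matrix.transpose_map, Matrix.mul_smul,
      Matrix.smul_mul]
  rw [pairCubic_eq, pairCubic_eq, hcongr, Matrix.det_mul, Matrix.det_mul, Matrix.det_transpose,
    hg, map_pow, map_pow]
  ring

theorem disc4_congr (g A B : Matrix (Fin 3) (Fin 3) R) :
    disc4 (g * A * gᵀ) (g * B * gᵀ) = g.det ^ 8 * disc4 A B := by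
  simp only [disc4, disc3, pairCubic_congr, Polynomial.coeff_C_mul]
  ring

theorem isSymm_lieAct4 {A B : Matrix (Fin 3) (Fin 3) R} (hA : A.IsSymm) (hB : B.IsSymm)
    (X₃ : Matrix (Fin 3) (Fin 3) R) (X₂ : Matrix (Fin 2) (Fin 2) R) :
    (lieAct4 X₃ X₂ A B).1.IsSymm ∧ (lieAct4 X₃ X₂ A B).2.IsSymm := by
  simp only [Matrix.IsSymm, lieAct4, Matrix.transpose_sub, Matrix.transpose_add,
    Matrix.transpose_mul, Matrix.transpose_smul, Matrix.transpose_transpose, hA.eq, hB.eq,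
    add_comm, and_self]

theorem lieAct4_congr {g h : Matrix (Fin 3) (Fin 3) R} (hgh : h * g = 1)
    (A B X₃ : Matrix (Fin 3) (Fin 3) R) (X₂ : Matrix (Fin 2) (Fin 2) R) :
    lieAct4 (g * (X₃ * h)) X₂ (g * A * gᵀ) (g * B * gᵀ) =
      (g * (lieAct4 X₃ X₂ A B).1 * gᵀ, g * (lieAct4 X₃ X₂ A B).2 * gᵀ) := by
  have hleft (S : Matrix (Fin 3) (Fin 3) R) :
      g * (X₃ * h) * (g * S * gᵀ) = g * (X₃ * S) * gᵀ := by
    calc g * (X₃ * h) * (g * S * gᵀ)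
      _ = g * X₃ * (h * g) * S * gᵀ := by simp only [Matrix.mul_assoc]
      _ = g * (X₃ * S) * gᵀ := by simp only [hgh, Matrix.mul_assoc, Matrix.one_mul]
  have hright (S : Matrix (Fin 3) (Fin 3) R) :
      g * S * gᵀ * (g * (X₃ * h))ᵀ = g * (S * X₃ᵀ) * gᵀ := by
    simpa only [Matrix.transpose_mul, Matrix.transpose_transpose, Matrix.mul_assoc] using
      congrArg Matrix.transpose (hleft Sᵀ)
  simp only [lieAct4, hleft, hright, mul_sub, sub_mul, mul_add, add_mul, Matrix.mul_smul,
    Matrix.smul_mul]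

theorem lieMap4_congr_comp {g h : Matrix (Fin 3) (Fin 3) R} (hgh : h * g = 1)
    {A B : Matrix (Fin 3) (Fin 3) R} (hA : A.IsSymm) (hB : B.IsSymm) :
    lieMap4 (g * A * gᵀ) (g * B * gᵀ) ∘ₗ lieAlg4Conj g h =
      (congrHom g).prodMap (congrHom g) ∘ₗ lieMap4 A B := by
  refine LinearMap.ext fun X => ?_
  have htrace : (g * (X.1 * h)).trace = X.1.trace := by
    rw [Matrix.trace_mul_comm, Matrix.mul_assoc, hgh, Matrix.mul_one]
  have hsymm := isSymm_lieAct4 hA hB X.1 !![X.2 0, X.2 2; X.2 1, X.1.trace - X.2 0]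
  simp only [lieMap4, lieAlg4Conj, congrHom, LinearMap.comp_apply, LinearMap.prodMap_apply,
    LinearMap.mulLeft_apply, LinearMap.mulRight_apply, LinearMap.id_apply, LinearMap.coe_mk,
    AddHom.coe_mk, MonoidHom.coe_mk, OneHom.coe_mk, htrace, lieAct4_congr hgh,
    congrLinear_symOf g hsymm.1, congrLinear_symOf g hsymm.2]

theorem lieDet4_congr {K : Type*} [Field K] (h2 : (2 : K) ≠ 0) {g A B : Matrix (Fin 3) (Fin 3) K}
    (hg : g.det ≠ 0) (hA : A.IsSymm) (hB : B.IsSymm) :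
    lieDet4 (g * A * gᵀ) (g * B * gᵀ) = g.det ^ 8 * lieDet4 A B := by
  have hcongr : LinearMap.det (congrHom g) = g.det ^ 4 :=
    map_eq_det_pow_of_map_diagonal h2 (LinearMap.det.comp congrHom) 4 det_congrHom_diagonal hg
  have hinv : g⁻¹ * g = 1 := Matrix.nonsing_inv_mul g hg.isUnit
  have hconj := LinearMap.det_conj (lieAlg4Conj g g⁻¹) lieAlg4Equiv.symm
  rw [det_lieAlg4Conj hinv] at hconj
  calc lieDet4 (g * A * gᵀ) (g * B * gᵀ)
    _ = LinearMap.det ((lieMap4 (g * A * gᵀ) (g * B * gᵀ) ∘ₗ lieAlg4Conj g g⁻¹) ∘ₗ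
          lieAlg4Equiv.toLinearMap) := by
      rw [lieDet4, ← mul_one (LinearMap.det _), ← hconj, ← LinearMap.det_comp]
      refine congrArg LinearMap.det (LinearMap.ext fun v => ?_)
      simp
    _ = LinearMap.det ((congrHom g).prodMap (congrHom g)) * lieDet4 A B := by
      rw [lieMap4_congr_comp hinv hA hB, LinearMap.comp_assoc, LinearMap.det_comp, lieDet4]
    _ = g.det ^ 8 * lieDet4 A B := by
      rw [LinearMap.det_prodMap, hcongr]
      ring

end Equivariance

section SchurComplement

/-- The Schur complement formula for the determinant, without division: the columns of `(T, N)`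
play the role of `(-P⁻¹ Q, 1)`, up to the factor `N`, where `P` and `Q` are the upper blocks. -/
theorem det_mul_det_of_fst_eq_zero {R V W : Type*} [CommRing R] [AddCommGroup V] [Module R V]
    [Module.Free R V] [Module.Finite R V] [AddCommGroup W] [Module R W] [Module.Free R W]
    [Module.Finite R W] (h : V × W →ₗ[R] V × W) (T : W →ₗ[R] V) (N : W →ₗ[R] W)
    (hTN : ∀ w, (h (T w, N w)).1 = 0) :
    LinearMap.det h * LinearMap.det N =
      LinearMap.det (LinearMap.fst R V W ∘ₗ h ∘ₗ LinearMap.inl R V W) *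
        LinearMap.det (LinearMap.snd R V W ∘ₗ h ∘ₗ T.prod N) := by
  classical
  let b := Module.Free.chooseBasis R V
  let c := Module.Free.chooseBasis R W
  let P := LinearMap.fst R V W ∘ₗ h ∘ₗ LinearMap.inl R V W
  let Q := LinearMap.snd R V W ∘ₗ h ∘ₗ LinearMap.inl R V W
  let S := LinearMap.snd R V W ∘ₗ h ∘ₗ T.prod N
  let shear : V × W →ₗ[R] V × W :=
    (LinearMap.fst R V W + T ∘ₗ LinearMap.snd R V W).prod (N ∘ₗ LinearMap.snd R V W)
  have hshear : LinearMap.toMatrix (b.prod c) (b.prod c) shear =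
      Matrix.fromBlocks 1 (LinearMap.toMatrix c b T) 0 (LinearMap.toMatrix c c N) := by
    ext (i | i) (j | j) <;>
      simp [shear, LinearMap.toMatrix_apply, Matrix.one_apply, Finsupp.single_apply, eq_comm]
  have hcomp : LinearMap.toMatrix (b.prod c) (b.prod c) (h ∘ₗ shear) =
      Matrix.fromBlocks (LinearMap.toMatrix b b P) 0
        (LinearMap.toMatrix b c Q) (LinearMap.toMatrix c c S) := by
    ext (i | i) (j | j) <;> simp [shear, LinearMap.toMatrix_apply, P, Q, S, hTN]
  have hdet : LinearMap.det shear = LinearMap.det N := by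
    rw [← LinearMap.det_toMatrix (b.prod c), hshear, Matrix.det_fromBlocks_zero₂₁,
      Matrix.det_one, one_mul, LinearMap.det_toMatrix]
  rw [← hdet, ← LinearMap.det_comp, ← LinearMap.det_toMatrix (b.prod c), hcomp,
    Matrix.det_fromBlocks_zero₁₂, LinearMap.det_toMatrix, LinearMap.det_toMatrix]

end SchurComplement

section IdentityFirstMatrix

variable {R : Type*} [CommRing R]

/-- The upper triangle completing the remaining coordinates `2 • w` of `𝔤₄(R)` to an element `X`
for which the first component of `X·(1,B)` vanishes; the factor `2` avoids a division. -/
def upperSolution (B : Matrix (Fin 3) (Fin 3) R) : (SymIdx → R) →ₗ[R] SymIdx → R where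
  toFun w ij :=
    if ij.1.1 = ij.1.2 then w ⟨(0, 0), le_rfl⟩ + w ⟨(1, 1), le_rfl⟩ * B ij.1.1 ij.1.2
    else 2 * w ⟨(1, 1), le_rfl⟩ * B ij.1.1 ij.1.2 - 2 * w ij
  map_add' v w := by
    ext ij
    simp only [Pi.add_apply]
    split_ifs <;> ring
  map_smul' c w := by
    ext ij
    simp only [Pi.smul_apply, smul_eq_mul, RingHom.id_apply]
    split_ifs <;> ring

theorem fst_lieMap4_one_upperSolution (B : Matrix (Fin 3) (Fin 3) R) (w : SymIdx → R) :
    (lieMap4 1 B (lieAlg4Equiv (upperSolution B w, (2 : R) • w))).1 = 0 := by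
  ext ⟨⟨i, j⟩, hij⟩
  rcases (show i ≤ j from hij).eq_or_lt with rfl | hlt
  · simp [lieMap4, lieAlg4Equiv, upperSolution, symOf, lieAct4]
    ring
  · simp [lieMap4, lieAlg4Equiv, upperSolution, symOf, lieAct4, hlt.le, hlt.ne, hlt.not_ge]

theorem det_fst_comp_lieMap4_one_comp_inl (B : Matrix (Fin 3) (Fin 3) R) :
    LinearMap.det (LinearMap.fst R (SymIdx → R) (SymIdx → R) ∘ₗ
      (lieMap4 1 B ∘ₗ lieAlg4Equiv.toLinearMap) ∘ₗ
        LinearMap.inl R (SymIdx → R) (SymIdx → R)) = 8 := by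
  have hdiag : LinearMap.fst R (SymIdx → R) (SymIdx → R) ∘ₗ
      (lieMap4 1 B ∘ₗ lieAlg4Equiv.toLinearMap) ∘ₗ LinearMap.inl R (SymIdx → R) (SymIdx → R) =
        Matrix.toLin' (Matrix.diagonal fun ij : SymIdx => if ij.1.1 = ij.1.2 then 2 else 1) := by
    refine LinearMap.ext fun u => funext fun ⟨⟨i, j⟩, hij⟩ => ?_
    rw [Matrix.toLin'_apply, Matrix.mulVec_diagonal]
    rcases (show i ≤ j from hij).eq_or_lt with rfl | hlt
    · simp [lieMap4, lieAlg4Equiv, symOf, lieAct4]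
      ring
    · simp [lieMap4, lieAlg4Equiv, symOf, lieAct4, hlt.le, hlt.ne, hlt.not_ge]
  rw [hdiag, LinearMap.det_toLin', Matrix.det_diagonal, ← symIdxEquiv.prod_comp, Fin.prod_univ_six]
  simp [symIdxEquiv]
  norm_num

/-- The Schur complement of the action map at `(1,B)`, scaled by `2`, for
`B = !![a, d, e; d, b, f; e, f, c]` and in the order of coordinates of `symIdxEquiv`. -/
def schurMatrix (a b c d e f : R) : Matrix (Fin 6) (Fin 6) R :=
  !![a, 2 * a ^ 2 + 4 * d ^ 2 + 4 * e ^ 2 - (a + b + c) * a, -2, -4 * d, -4 * e, 0;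
    b, 2 * b ^ 2 + 4 * f ^ 2 - (a + b + c) * b, -2, 4 * d, 0, -4 * f;
    c, 2 * c ^ 2 - (a + b + c) * c, -2, 0, 4 * e, 4 * f;
    d, a * d + 3 * b * d + 4 * e * f - (a + b + c) * d, 0, 2 * a - 2 * b, -2 * f, -2 * e;
    e, a * e + 2 * d * f + 3 * c * e - (a + b + c) * e, 0, -2 * f, 2 * a - 2 * c, 2 * d;
    f, b * f + 3 * c * f - (a + b + c) * f, 0, 2 * e, 2 * d, 2 * b - 2 * c]

theorem det_schurMatrix (a b c d e f : R) :
    (schurMatrix a b c d e f).det = 32 * disc3 1 (-(a + b + c))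
      (a * b + a * c + b * c - d ^ 2 - e ^ 2 - f ^ 2)
      (-(a * b * c + 2 * d * e * f - a * f ^ 2 - b * e ^ 2 - c * d ^ 2)) := by
  simp [schurMatrix, Matrix.det_succ_row_zero, Fin.sum_univ_succ, disc3, Fin.succAbove]
  ring

open Polynomial in
theorem pairCubic_one (a b c d e f : R) :
    pairCubic 1 !![a, d, e; d, b, f; e, f, c] =
      C (C 4 * X ^ 3) + C (C (-4 * (a + b + c)) * X ^ 2) * X +
        C (C (4 * (a * b + a * c + b * c - d ^ 2 - e ^ 2 - f ^ 2)) * X) * X ^ 2 +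
        C (C (-4 * (a * b * c + 2 * d * e * f - a * f ^ 2 - b * e ^ 2 - c * d ^ 2))) * X ^ 3 := by
  rw [pairCubic, Matrix.det_fin_three]
  simp [Matrix.one_apply, map_ofNat C]
  ring

theorem disc4_one (a b c d e f : R) :
    disc4 1 !![a, d, e; d, b, f; e, f, c] = 256 * disc3 1 (-(a + b + c))
      (a * b + a * c + b * c - d ^ 2 - e ^ 2 - f ^ 2)
      (-(a * b * c + 2 * d * e * f - a * f ^ 2 - b * e ^ 2 - c * d ^ 2)) := by
  rw [disc4, pairCubic_one]
  simp [disc3, Polynomial.coeff_X, Polynomial.coeff_C, Polynomial.coeff_X_pow, -map_mul, -map_pow,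
    -map_neg]
  ring

theorem snd_lieMap4_one_apply (B : Matrix (Fin 3) (Fin 3) R)
    (X : Matrix (Fin 3) (Fin 3) R × (Fin 3 → R)) (ij : SymIdx) :
    (lieMap4 1 B X).2 ij = ∑ k, X.1 ij.1.1 k * B k ij.1.2 + ∑ k, B ij.1.1 k * X.1 ij.1.2 k -
      (if ij.1.1 = ij.1.2 then X.2 2 else 0) - (X.1.trace - X.2 0) * B ij.1.1 ij.1.2 := by
  simp [lieMap4, lieAct4, symOf, Matrix.mul_apply, Matrix.one_apply]

theorem snd_lieMap4_one_upperSolution (a b c d e f : R) (w : SymIdx → R) :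
    (lieMap4 1 !![a, d, e; d, b, f; e, f, c] (lieAlg4Equiv
      (upperSolution !![a, d, e; d, b, f; e, f, c] w, (2 : R) • w))).2 ∘ symIdxEquiv =
        (schurMatrix a b c d e f).mulVec (w ∘ symIdxEquiv) := by
  set x := w ∘ symIdxEquiv
  have hX : lieAlg4Equiv (upperSolution !![a, d, e; d, b, f; e, f, c] w, (2 : R) • w) =
      (!![x 0 + x 1 * a, 2 * x 1 * d - 2 * x 3, 2 * x 1 * e - 2 * x 4;
        2 * x 3, x 0 + x 1 * b, 2 * x 1 * f - 2 * x 5;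
        2 * x 4, 2 * x 5, x 0 + x 1 * c],
      ![2 * x 0, 2 * x 1, 2 * x 2]) := by
    refine Prod.ext (Matrix.ext fun i j => ?_) (funext fun i => ?_)
    · fin_cases i <;> fin_cases j <;> rfl
    · fin_cases i <;> rfl
  rw [hX]
  clear_value x
  funext i
  rw [Function.comp_apply, snd_lieMap4_one_apply]
  fin_cases i <;>
    simp [symIdxEquiv, schurMatrix, Matrix.mulVec, dotProduct, Fin.sum_univ_succ,
      Matrix.trace_fin_three] <;>
    ring

theorem lieDet4_one {B : Matrix (Fin 3) (Fin 3) R} (hB : B.IsSymm) :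
    64 * lieDet4 1 B = disc4 1 B := by
  nontriviality R
  let h := lieMap4 1 B ∘ₗ lieAlg4Equiv.toLinearMap
  let N : (SymIdx → R) →ₗ[R] SymIdx → R := (2 : R) • LinearMap.id
  let S := LinearMap.snd R (SymIdx → R) (SymIdx → R) ∘ₗ h ∘ₗ (upperSolution B).prod N
  have hN : LinearMap.det N = 64 := by
    rw [LinearMap.det_smul, LinearMap.det_id, Module.finrank_fintype_fun_eq_card,
      ← Fintype.card_congr symIdxEquiv, Fintype.card_fin]
    norm_num
  have hBeq : B = !![B 0 0, B 0 1, B 0 2; B 0 1, B 1 1, B 1 2; B 0 2, B 1 2, B 2 2] := by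
    conv_lhs => rw [Matrix.eta_fin_three B, hB.apply 0 1, hB.apply 0 2, hB.apply 1 2]
  have hS : LinearMap.det S =
      (schurMatrix (B 0 0) (B 1 1) (B 2 2) (B 0 1) (B 0 2) (B 1 2)).det := by
    rw [← LinearMap.det_toLin', ← LinearMap.det_conj S (LinearEquiv.funCongrLeft R R symIdxEquiv)]
    refine congrArg LinearMap.det (LinearMap.ext fun x => ?_)
    have := snd_lieMap4_one_upperSolution (B 0 0) (B 1 1) (B 2 2) (B 0 1) (B 0 2) (B 1 2)
      (x ∘ symIdxEquiv.symm)
    rw [← hBeq, Function.comp_assoc, Equiv.symm_comp_self, Function.comp_id] at this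
    exact this
  calc 64 * lieDet4 1 B
    _ = LinearMap.det h * LinearMap.det N := by rw [hN, mul_comm, lieDet4]
    _ = 8 * LinearMap.det S := by
      rw [det_mul_det_of_fst_eq_zero h (upperSolution B) N (fst_lieMap4_one_upperSolution B),
        det_fst_comp_lieMap4_one_comp_inl]
    _ = disc4 1 B := by
      conv_rhs => rw [hBeq, disc4_one]
      rw [hS, det_schurMatrix]
      ring

end IdentityFirstMatrix

section Discriminant

open scoped Matrix

theorem exists_eq_mul_transpose {n K : Type*} [Fintype n] [Field K] [IsAlgClosed K]
    (h2 : (2 : K) ≠ 0) {A : Matrix n n K} (hA : A.IsSymm) : ∃ g, A = g * gᵀ := by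
  classical
  have := invertibleOfNonzero h2
  let β := Matrix.toBilin' A
  have hβ : LinearMap.IsSymm β :=
    LinearMap.BilinForm.isSymm_iff.mp (Matrix.isSymm_toBilin'_iff_isSymm.mpr hA)
  obtain ⟨v, hv⟩ := LinearMap.BilinForm.exists_orthogonal_basis hβ
  let b := v.reindex (Fintype.equivOfCardEq (by simp) : Fin _ ≃ n)
  choose z hz using fun i => IsAlgClosed.exists_eq_mul_self (β (b i) (b i))
  have hdiag : LinearMap.BilinForm.toMatrix b β = Matrix.diagonal z * Matrix.diagonal z := by
    ext i j
    rw [Matrix.diagonal_mul_diagonal, LinearMap.BilinForm.toMatrix_apply, Matrix.diagonal_apply]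
    split_ifs with h
    · rw [← h, hz]
    · simpa [b] using hv (by simpa using h)
  let Q := b.toMatrix (Pi.basisFun K n)
  refine ⟨Qᵀ * Matrix.diagonal z, ?_⟩
  calc A
    _ = LinearMap.BilinForm.toMatrix (Pi.basisFun K n) β := by
      ext i j
      simp [β, LinearMap.BilinForm.toMatrix_apply]
    _ = Qᵀ * (Matrix.diagonal z * Matrix.diagonal z) * Q := by
      rw [← hdiag, LinearMap.BilinForm.toMatrix_mul_basis_toMatrix]
    _ = Qᵀ * Matrix.diagonal z * (Qᵀ * Matrix.diagonal z)ᵀ := by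
      simp only [Matrix.transpose_mul, Matrix.transpose_transpose, Matrix.diagonal_transpose,
        Matrix.mul_assoc]

theorem lieDet4_eq_disc4_of_det_ne_zero {K : Type*} [Field K] [IsAlgClosed K] (h2 : (2 : K) ≠ 0)
    {A B : Matrix (Fin 3) (Fin 3) K} (hA : A.IsSymm) (hB : B.IsSymm) (hdet : A.det ≠ 0) :
    64 * lieDet4 A B = disc4 A B := by
  obtain ⟨g, rfl⟩ := exists_eq_mul_transpose h2 hA
  have hg : g.det ≠ 0 := by
    rw [Matrix.det_mul] at hdet
    exact left_ne_zero_of_mul hdet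
  let B' := g⁻¹ * B * g⁻¹ᵀ
  have hB' : B'.IsSymm := isSymm_mul_mul_transpose _ hB
  have hBB' : B = g * B' * gᵀ := by
    have h : g * g⁻¹ = 1 := Matrix.mul_nonsing_inv g hg.isUnit
    calc B = g * g⁻¹ * B * (g * g⁻¹)ᵀ := by simp [h]
      _ = g * B' * gᵀ := by simp only [B', Matrix.transpose_mul, Matrix.mul_assoc]
  have hdisc := disc4_congr g 1 B'
  have hlie := lieDet4_congr h2 hg Matrix.isSymm_one hB'
  rw [mul_one, ← hBB'] at hdisc hlie
  rw [hdisc, hlie, ← lieDet4_one hB', mul_left_comm]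

open Polynomial in
theorem lieDet4_eq_disc4 {R : Type*} [CommRing R] [IsDomain R] (h2 : (2 : R) ≠ 0)
    {A B : Matrix (Fin 3) (Fin 3) R} (hA : A.IsSymm) (hB : B.IsSymm) :
    64 * lieDet4 A B = disc4 A B := by
  -- `A' = X • 1 + A` is invertible over the fraction field and specializes to `A` at `X = 0`.
  let A' : Matrix (Fin 3) (Fin 3) R[X] := (-A).charmatrix
  let B' : Matrix (Fin 3) (Fin 3) R[X] := B.map C
  have hA' : A'.IsSymm := by
    rw [Matrix.IsSymm, ← Matrix.charmatrix_transpose, Matrix.transpose_neg, hA.eq]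
  let F := FractionRing R[X]
  let σ : R[X] →+* AlgebraicClosure F :=
    (algebraMap F (AlgebraicClosure F)).comp (algebraMap R[X] F)
  have hσ : Function.Injective σ :=
    (algebraMap F (AlgebraicClosure F)).injective.comp (IsFractionRing.injective _ _)
  have hσC : Function.Injective (σ.comp C) := hσ.comp C_injective
  have hgeneric : 64 * lieDet4 A' B' = disc4 A' B' := by
    apply hσ
    rw [map_mul, map_ofNat, map_lieDet4, map_disc4]
    refine lieDet4_eq_disc4_of_det_ne_zero ?_ (hA'.map _) ((hB.map _).map _) ?_
    · rwa [← map_ofNat (σ.comp C), map_ne_zero_iff _ hσC]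
    · rw [← RingHom.mapMatrix_apply, ← RingHom.map_det, map_ne_zero_iff _ hσ]
      exact (Matrix.charpoly_monic (-A)).ne_zero
  have hA0 : A'.map (evalRingHom 0) = A := by
    ext i j
    by_cases h : i = j <;> simp [A', h]
  have hB0 : B'.map (evalRingHom 0) = B := by
    ext i j
    simp [B']
  simpa only [map_mul, map_ofNat, map_lieDet4, map_disc4, hA0, hB0] using
    congrArg (evalRingHom 0) hgeneric

end Discriminant

theorem finrank_quotient_lieAct4_eq_order_disc4_general {R : Type*} [CommRing R] [IsDomain R]
    [IsPrincipalIdealRing R] (h2 : IsUnit (2 : R)) {A B : Matrix (Fin 3) (Fin 3) R}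
    (hA : A.IsSymm) (hB : B.IsSymm) (hv : disc4 A B ≠ 0) {M : Submodule R (SymPair R)}
    (hM : (M : Set (SymPair R)) =
      Set.range (fun X : {Y : Matrix (Fin 3) (Fin 3) R × Matrix (Fin 2) (Fin 2) R //
          Y.1.trace = Y.2.trace} =>
        (symOf (lieAct4 X.1.1 X.1.2 A B).1, symOf (lieAct4 X.1.1 X.1.2 A B).2))) :
    Module.length R (SymPair R ⧸ M) = Ring.ord R (disc4 A B) := by
  have hrange : M = LinearMap.range (lieMap4 A B ∘ₗ lieAlg4Equiv.toLinearMap) := by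
    rw [LinearMap.range_comp_of_range_eq_top _ lieAlg4Equiv.range]
    exact SetLike.coe_injective (hM.trans (range_lieMap4 A B).symm)
  have hdisc : 64 * lieDet4 A B = disc4 A B := lieDet4_eq_disc4 h2.ne_zero hA hB
  have h64 : IsUnit (64 : R) := by
    rw [show (64 : R) = 2 ^ 6 by norm_num]
    exact h2.pow 6
  have hlie : lieDet4 A B ≠ 0 := right_ne_zero_of_mul (hdisc.trans_ne hv)
  rw [hrange, ← hdisc, Ring.ord_mul_of_isUnit_left h64]
  exact length_quotient_range_eq_ord_det _ hlie

/-- Let `k` be a field of characteristic not `2` or `3`, and let `(A,B)` be a pair of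
symmetric 3×3 matrices over `k⟦t⟧` with `Δ₄(A,B) ≠ 0`.  If `M ⊆ Sym₃(k⟦t⟧)²` is the image
of the Lie algebra action map `𝔤₄(k⟦t⟧) → Sym₃(k⟦t⟧)²`, `(X₃,X₂) ↦ (X₃,X₂)·(A,B)`, then
`Sym₃(k⟦t⟧)²/M` is a finite-dimensional `k`-vector space of dimension equal to the
`t`-adic order of `Δ₄(A,B)`. -/
theorem finrank_quotient_lieAct4_eq_order_disc4 {k : Type*} [Field k]
    (hchar2 : ringChar k ≠ 2) (hchar3 : ringChar k ≠ 3)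
    (A B : Matrix (Fin 3) (Fin 3) (PowerSeries k))
    (hA : A.IsSymm) (hB : B.IsSymm)
    (hv : disc4 A B ≠ 0)
    (M : Submodule (PowerSeries k) ((SymIdx → PowerSeries k) × (SymIdx → PowerSeries k)))
    (hM : (M : Set ((SymIdx → PowerSeries k) × (SymIdx → PowerSeries k))) =
      Set.range (fun X : {Y : Matrix (Fin 3) (Fin 3) (PowerSeries k) ×
          Matrix (Fin 2) (Fin 2) (PowerSeries k) // Y.1.trace = Y.2.trace} =>
        (symOf (lieAct4 X.1.1 X.1.2 A B).1, symOf (lieAct4 X.1.1 X.1.2 A B).2))) :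
    FiniteDimensional k (((SymIdx → PowerSeries k) × (SymIdx → PowerSeries k)) ⧸ M) ∧
      (Module.finrank k (((SymIdx → PowerSeries k) × (SymIdx → PowerSeries k)) ⧸ M) : ℕ∞) =
        PowerSeries.order (disc4 A B) := by
  have h2 : IsUnit (2 : PowerSeries k) := by
    rw [← map_ofNat (PowerSeries.C (R := k))]
    exact (Ring.two_ne_zero hchar2).isUnit.map _
  exact finiteDimensional_and_finrank_eq_order hv
    (finrank_quotient_lieAct4_eq_order_disc4_general h2 hA hB hv hM)
end
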